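/- Let ω be a convex open subdomain of the upper unit hemisphere S₊^{n−1} ⊂ S^{n−1}. Then the first nonzero eigenvalue Λ of the Laplace–Beltrami operator on ω with zero Neumann boundary conditions satisfies Λ ≥ n − 1. -/

import Mathlib

open MeasureTheory Set
open scoped ENNReal
noncomputable section

/-!
Extend a mean-zero `Φ` on `ω` to the one-homogeneous function `f x = ‖x‖ * Φ (x / ‖x‖)` on the
convex cone `K` over `ω`. On a convex set the standard Gaussian measure satisfies the Poincaré
inequality `Var f ≤ ∫ ‖∇f‖²`: this is the second-order term in `ε` of the Prékopa–Leindler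
inequality applied to `e^{εφ}`, `e^{-εφ}` and a suitable majorant at the midpoint. In polar
coordinates, with `m_j = ∫₀^∞ r ^ j * exp (-r² / 2) dr`,
`∫_K f² = m_{n+1} ∫_ω Φ²` and `∫_K ‖∇f‖² = m_{n-1} (∫_ω Φ² + ∫_ω ‖∇Φ‖²)`, and `m_{n+1} = n m_{n-1}`,
so the Poincaré inequality for `f` reads `n ∫ Φ² ≤ ∫ Φ² + ∫ ‖∇Φ‖²`. Hausdorff measure on the sphere
is proportional to the polar surface measure because both are invariant under rotations.
-/

open Filter Topology
open scoped NNReal Pointwise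

/-! ### Brunn–Minkowski and Prékopa–Leindler -/

theorem volume_add_volume_le_volume_add_of_isCompact {A B : Set ℝ} (hA : IsCompact A)
    (hB : IsCompact B) (hA₀ : A.Nonempty) (hB₀ : B.Nonempty) :
    volume A + volume B ≤ volume (A + B) := by
  obtain ⟨a, haA, ha⟩ := hA.exists_isGreatest hA₀
  obtain ⟨b, hbB, hb⟩ := hB.exists_isLeast hB₀
  have hdisj : AEDisjoint volume (b +ᵥ A) (a +ᵥ B) := by
    refine measure_mono_null (t := {a + b}) ?_ (by simp)
    rintro _ ⟨⟨x, hx, rfl⟩, ⟨y, hy, hxy⟩⟩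
    have := ha hx
    have := hb hy
    simp only [vadd_eq_add, mem_singleton_iff] at hxy ⊢
    linarith
  calc volume A + volume B = volume ((b +ᵥ A) ∪ (a +ᵥ B)) := by
        rw [measure_union₀ (hB.measurableSet.const_vadd a).nullMeasurableSet hdisj,
          measure_vadd, measure_vadd]
    _ ≤ volume (A + B) := by
        refine measure_mono (union_subset ?_ ?_)
        · rintro _ ⟨x, hx, rfl⟩
          exact ⟨x, hx, b, hbB, add_comm x b⟩
        · rintro _ ⟨y, hy, rfl⟩
          exact ⟨a, haA, y, hy, rfl⟩

theorem volume_add_volume_le_volume_add {A B : Set ℝ} (hA : MeasurableSet A)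
    (hB : MeasurableSet B) (hA₀ : A.Nonempty) (hB₀ : B.Nonempty) :
    volume A + volume B ≤ volume (A + B) := by
  obtain ⟨a, ha⟩ := hA₀
  obtain ⟨b, hb⟩ := hB₀
  simp only [hA.measure_eq_iSup_isCompact, hB.measure_eq_iSup_isCompact, iSup_and']
  refine ENNReal.biSup_add_biSup_le' ⟨∅, by simp⟩ ⟨∅, by simp⟩ fun s hs t ht ↦ ?_
  calc volume s + volume t ≤ volume (insert a s) + volume (insert b t) := by
        gcongr <;> exact subset_insert _ _
    _ ≤ volume (insert a s + insert b t) :=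
        volume_add_volume_le_volume_add_of_isCompact (hs.2.insert a) (ht.2.insert b)
          (insert_nonempty _ _) (insert_nonempty _ _)
    _ ≤ volume (A + B) := by
        gcongr
        exacts [insert_subset ha hs.1, insert_subset hb ht.1]

theorem volume_setOf_pos_ofReal_lt (a : ℝ≥0∞) :
    volume {t : ℝ | 0 < t ∧ ENNReal.ofReal t < a} = a := by
  rcases eq_or_ne a ∞ with rfl | ha
  · have : {t : ℝ | 0 < t ∧ ENNReal.ofReal t < ∞} = Ioi 0 := by ext; simp
    rw [this, Real.volume_Ioi]
  · have : {t : ℝ | 0 < t ∧ ENNReal.ofReal t < a} = Ioo 0 a.toReal := by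
      ext t
      simp only [mem_ofPred_eq, mem_Ioo, and_congr_right_iff]
      exact fun ht ↦ ENNReal.ofReal_lt_iff_lt_toReal ht.le ha
    rw [this, Real.volume_Ioo, sub_zero, ENNReal.ofReal_toReal ha]

theorem lintegral_eq_lintegral_Ioi_measure_ofReal_lt {α : Type*} [MeasurableSpace α]
    (μ : Measure α) [SFinite μ] {f : α → ℝ≥0∞} (hf : Measurable f) :
    ∫⁻ x, f x ∂μ = ∫⁻ t in Ioi (0 : ℝ), μ {x | ENNReal.ofReal t < f x} := by
  have hS : MeasurableSet {p : α × ℝ | 0 < p.2 ∧ ENNReal.ofReal p.2 < f p.1} :=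
    (measurableSet_lt measurable_const measurable_snd).inter
      (measurableSet_lt measurable_snd.ennreal_ofReal (hf.comp measurable_fst))
  calc ∫⁻ x, f x ∂μ = (μ.prod volume) {p : α × ℝ | 0 < p.2 ∧ ENNReal.ofReal p.2 < f p.1} := by
        rw [Measure.prod_apply hS]
        exact lintegral_congr fun x ↦ (volume_setOf_pos_ofReal_lt (f x)).symm
    _ = ∫⁻ t in Ioi (0 : ℝ), μ {x | ENNReal.ofReal t < f x} := by
        rw [Measure.prod_apply_symm hS, ← lintegral_indicator measurableSet_Ioi]
        refine lintegral_congr fun t ↦ ?_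
        by_cases ht : 0 < t <;> simp [ht, indicator]

theorem lintegral_add_lintegral_le_of_min_le {f g h : ℝ → ℝ≥0∞} (hf : Measurable f)
    (hg : Measurable g) (hh : Measurable h) (hfg : ⨆ x, f x = ⨆ x, g x)
    (hmin : ∀ x y, min (f x) (g y) ≤ h (midpoint ℝ x y)) :
    (∫⁻ x, f x) + (∫⁻ x, g x) ≤ 2 * ∫⁻ x, h x := by
  have hanti (φ : ℝ → ℝ≥0∞) : Antitone fun t : ℝ ↦ volume {x | ENNReal.ofReal t < φ x} :=
    fun s t hst ↦ measure_mono fun x hx ↦ (ENNReal.ofReal_le_ofReal hst).trans_lt hx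
  simp only [lintegral_eq_lintegral_Ioi_measure_ofReal_lt volume, hf, hg, hh]
  rw [← lintegral_add_left (hanti f).measurable, ← lintegral_const_mul _ (hanti h).measurable]
  refine lintegral_mono fun t ↦ ?_
  by_cases ht : ENNReal.ofReal t < ⨆ x, f x
  · have hsub : {x | ENNReal.ofReal t < f x} + {x | ENNReal.ofReal t < g x} ⊆
        (2 : ℝ) • {x | ENNReal.ofReal t < h x} := by
      rintro _ ⟨x, hx, y, hy, rfl⟩
      refine ⟨midpoint ℝ x y, (lt_min hx hy).trans_le (hmin x y), ?_⟩
      simp [midpoint_eq_smul_add]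
    calc volume {x | ENNReal.ofReal t < f x} + volume {x | ENNReal.ofReal t < g x}
      _ ≤ volume ({x | ENNReal.ofReal t < f x} + {x | ENNReal.ofReal t < g x}) :=
          volume_add_volume_le_volume_add (measurableSet_lt measurable_const hf)
            (measurableSet_lt measurable_const hg) (lt_iSup_iff.1 ht)
            (lt_iSup_iff.1 (ht.trans_eq hfg))
      _ ≤ volume ((2 : ℝ) • {x | ENNReal.ofReal t < h x}) := measure_mono hsub
      _ = 2 * volume {x | ENNReal.ofReal t < h x} := by simp [Measure.addHaar_smul]
  · have hf_le (x : ℝ) : ¬ ENNReal.ofReal t < f x := fun hx ↦ ht (hx.trans_le (le_iSup f x))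
    have hg_le (x : ℝ) : ¬ ENNReal.ofReal t < g x := fun hx ↦
      ht (hfg ▸ hx.trans_le (le_iSup g x))
    simp [hf_le, hg_le]

theorem mul_le_sq_of_add_le_two_mul {a b c : ℝ≥0∞} (h : a + b ≤ 2 * c) :
    a * b ≤ c ^ 2 := by
  rcases eq_or_ne c ∞ with rfl | hc
  · simp
  have hab : a + b ≠ ∞ := ne_top_of_le_ne_top (by finiteness) h
  lift a to ℝ≥0 using (ENNReal.add_ne_top.1 hab).1
  lift b to ℝ≥0 using (ENNReal.add_ne_top.1 hab).2
  lift c to ℝ≥0 using hc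
  norm_cast at h ⊢
  rw [← NNReal.coe_le_coe] at h ⊢
  push_cast at h ⊢
  nlinarith [sq_nonneg ((a : ℝ) - b), a.coe_nonneg, b.coe_nonneg, c.coe_nonneg]

theorem lintegral_mul_lintegral_le_of_iSup_ne_top {f g h : ℝ → ℝ≥0∞} (hf : Measurable f)
    (hg : Measurable g) (hh : Measurable h) (hf_top : ⨆ x, f x ≠ ∞) (hg_top : ⨆ x, g x ≠ ∞)
    (hmul : ∀ x y, f x * g y ≤ h (midpoint ℝ x y) ^ 2) :
    (∫⁻ x, f x) * (∫⁻ x, g x) ≤ (∫⁻ x, h x) ^ 2 := by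
  set a := ⨆ x, f x with ha
  set b := ⨆ x, g x with hb
  rcases eq_or_ne a 0 with ha₀ | ha₀
  · have (x : ℝ) : f x = 0 := by simpa using ENNReal.iSup_eq_zero.1 ha₀ x
    simp [this]
  rcases eq_or_ne b 0 with hb₀ | hb₀
  · have (x : ℝ) : g x = 0 := by simpa using ENNReal.iSup_eq_zero.1 hb₀ x
    simp [this]
  obtain ⟨c, hc⟩ : ∃ c, c ^ 2 = a * b :=
    ⟨(a * b) ^ (1 / 2 : ℝ), by rw [← ENNReal.rpow_mul_natCast]; norm_num⟩
  have hsup : ⨆ x, b * f x = ⨆ x, a * g x := by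
    rw [← ENNReal.mul_iSup, ← ENNReal.mul_iSup, ← ha, ← hb, mul_comm]
  have hmin (x y : ℝ) : min (b * f x) (a * g y) ≤ c * h (midpoint ℝ x y) := by
    refine (ENNReal.pow_le_pow_left_iff two_ne_zero).1 ?_
    calc min (b * f x) (a * g y) ^ 2 ≤ b * f x * (a * g y) := by
          rw [sq]; exact mul_le_mul' (min_le_left _ _) (min_le_right _ _)
      _ = a * b * (f x * g y) := by ring
      _ ≤ a * b * h (midpoint ℝ x y) ^ 2 := by gcongr; exact hmul x y
      _ = (c * h (midpoint ℝ x y)) ^ 2 := by rw [mul_pow, hc]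
  have hadd := lintegral_add_lintegral_le_of_min_le (hf.const_mul b) (hg.const_mul a)
    (hh.const_mul c) hsup hmin
  rw [lintegral_const_mul b hf, lintegral_const_mul a hg, lintegral_const_mul c hh] at hadd
  have hscaled : a * b * ((∫⁻ x, f x) * ∫⁻ x, g x) ≤ a * b * (∫⁻ x, h x) ^ 2 := by
    calc a * b * ((∫⁻ x, f x) * ∫⁻ x, g x) = b * (∫⁻ x, f x) * (a * ∫⁻ x, g x) := by ring
      _ ≤ (c * ∫⁻ x, h x) ^ 2 := mul_le_sq_of_add_le_two_mul hadd
      _ = a * b * (∫⁻ x, h x) ^ 2 := by rw [mul_pow, hc]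
  exact (ENNReal.mul_le_mul_iff_right (mul_ne_zero ha₀ hb₀)
    (ENNReal.mul_ne_top hf_top hg_top)).1 hscaled

/-- The Prékopa–Leindler inequality for the measure `μ`, restricted to midpoints and squared so that
no square roots of `ℝ≥0∞`-valued functions occur. -/
def PrekopaLeindler {E : Type*} [AddCommGroup E] [Module ℝ E] [MeasurableSpace E]
    (μ : Measure E) : Prop :=
  ∀ ⦃f g h : E → ℝ≥0∞⦄, Measurable f → Measurable g → Measurable h →
    (∀ x y, f x * g y ≤ h (midpoint ℝ x y) ^ 2) →
      (∫⁻ x, f x ∂μ) * (∫⁻ x, g x ∂μ) ≤ (∫⁻ x, h x ∂μ) ^ 2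

namespace PrekopaLeindler

theorem volume_real : PrekopaLeindler (volume : Measure ℝ) := by
  intro f g h hf hg hh hmul
  have htrunc (N : ℕ) : (∫⁻ x, min (f x) N) * (∫⁻ x, min (g x) N) ≤ (∫⁻ x, h x) ^ 2 := by
    have hsup (φ : ℝ → ℝ≥0∞) : ⨆ x, min (φ x) N ≠ ∞ :=
      ne_top_of_le_ne_top (ENNReal.natCast_ne_top N) (iSup_le fun x ↦ min_le_right _ _)
    exact lintegral_mul_lintegral_le_of_iSup_ne_top (by fun_prop) (by fun_prop) hh (hsup f) (hsup g)
      fun x y ↦ (mul_le_mul' (min_le_left _ _) (min_le_left _ _)).trans (hmul x y)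
  have hlim {φ : ℝ → ℝ≥0∞} (hφ : Measurable φ) :
      Tendsto (fun N : ℕ ↦ ∫⁻ x, min (φ x) N) atTop (𝓝 (∫⁻ x, φ x)) := by
    refine lintegral_tendsto_of_tendsto_of_monotone (fun N ↦ by fun_prop)
      (ae_of_all _ fun x m n hmn ↦ by dsimp only; gcongr) (ae_of_all _ fun x ↦ ?_)
    simpa using (tendsto_const_nhds (x := φ x)).min ENNReal.tendsto_nat_nhds_top
  rcases eq_or_ne (∫⁻ x, f x) 0 with hF | hF
  · simp [hF]
  rcases eq_or_ne (∫⁻ x, g x) 0 with hG | hG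
  · simp [hG]
  exact le_of_tendsto' (ENNReal.Tendsto.mul (hlim hf) (.inl hF) (hlim hg) (.inl hG)) htrunc

variable {E F : Type*} [AddCommGroup E] [Module ℝ E] [MeasurableSpace E] [AddCommGroup F]
  [Module ℝ F] [MeasurableSpace F] {μ : Measure E} {ν : Measure F}

theorem of_subsingleton [Subsingleton E] : PrekopaLeindler μ := by
  intro f g h _ _ _ hmul
  have hconst (φ : E → ℝ≥0∞) : φ = fun _ ↦ φ 0 := funext fun x ↦ by rw [Subsingleton.elim x 0]
  rw [hconst f, hconst g, hconst h]
  simp only [lintegral_const]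
  calc f 0 * μ univ * (g 0 * μ univ) = f 0 * g 0 * μ univ ^ 2 := by ring
    _ ≤ h (midpoint ℝ 0 0) ^ 2 * μ univ ^ 2 := by gcongr; exact hmul 0 0
    _ = (h 0 * μ univ) ^ 2 := by rw [midpoint_self, mul_pow]

theorem prod [SFinite ν] (hμ : PrekopaLeindler μ) (hν : PrekopaLeindler ν) :
    PrekopaLeindler (μ.prod ν) := by
  intro f g h hf hg hh hmul
  rw [lintegral_prod _ hf.aemeasurable, lintegral_prod _ hg.aemeasurable,
    lintegral_prod _ hh.aemeasurable]
  refine hμ hf.lintegral_prod_right' hg.lintegral_prod_right' hh.lintegral_prod_right' fun s t ↦ ?_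
  refine hν (hf.comp measurable_prodMk_left) (hg.comp measurable_prodMk_left)
    (hh.comp measurable_prodMk_left) fun x y ↦ ?_
  exact hmul (s, x) (t, y)

theorem of_measurePreserving (hμ : PrekopaLeindler μ) (e : E ≃ₗ[ℝ] F)
    (he : MeasurePreserving e μ ν) : PrekopaLeindler ν := by
  intro f g h hf hg hh hmul
  rw [← he.lintegral_comp hf, ← he.lintegral_comp hg, ← he.lintegral_comp hh]
  refine hμ (hf.comp he.measurable) (hg.comp he.measurable) (hh.comp he.measurable) fun x y ↦ ?_
  simpa [midpoint_eq_smul_add] using hmul (e x) (e y)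

theorem volume_pi_fin (n : ℕ) : PrekopaLeindler (volume : Measure (Fin n → ℝ)) := by
  induction n with
  | zero => exact of_subsingleton
  | succ n ih =>
    have hcons : ⇑(MeasurableEquiv.piFinSuccAbove (fun _ : Fin (n + 1) ↦ ℝ) 0).symm =
        Fin.consLinearEquiv ℝ fun _ ↦ ℝ := by
      ext p i
      simp [MeasurableEquiv.piFinSuccAbove]
    refine (volume_real.prod ih).of_measurePreserving (Fin.consLinearEquiv ℝ fun _ ↦ ℝ) ?_
    exact hcons ▸ (volume_preserving_piFinSuccAbove (fun _ : Fin (n + 1) ↦ ℝ) 0).symm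

theorem volume_innerProductSpace {E : Type*} [NormedAddCommGroup E] [InnerProductSpace ℝ E]
    [FiniteDimensional ℝ E] [MeasurableSpace E] [BorelSpace E] :
    PrekopaLeindler (volume : Measure E) := by
  have heuclidean : PrekopaLeindler
      (volume : Measure (EuclideanSpace ℝ (Fin (Module.finrank ℝ E)))) :=
    (volume_pi_fin _).of_measurePreserving (WithLp.linearEquiv 2 ℝ _).symm
      (PiLp.volume_preserving_toLp _)
  exact heuclidean.of_measurePreserving (stdOrthonormalBasis ℝ E).repr.symm.toLinearEquiv
    (stdOrthonormalBasis ℝ E).measurePreserving_repr_symm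

end PrekopaLeindler

/-! ### The Poincaré inequality for strongly log-concave measures -/

theorem tendsto_sub_div_sq_of_hasDerivAt {f f' : ℝ → ℝ} {c : ℝ}
    (hf : ∀ᶠ x in 𝓝 0, HasDerivAt f (f' x) x) (hf'₀ : f' 0 = 0) (hf' : HasDerivAt f' c 0) :
    Tendsto (fun x ↦ (f x - f 0) / x ^ 2) (𝓝[>] 0) (𝓝 (c / 2)) := by
  have hslope : Tendsto (fun x ↦ f' x / (2 * x)) (𝓝[>] 0) (𝓝 (c / 2)) := by
    have := (hf'.tendsto_slope.mono_left (nhdsGT_le_nhdsNE 0)).div_const 2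
    refine this.congr fun x ↦ ?_
    rw [slope_def_field, hf'₀, sub_zero, sub_zero, div_div, mul_comm]
  have hcont : Tendsto (fun x ↦ f x - f 0) (𝓝[>] 0) (𝓝 0) := by
    have := (hf.self_of_nhds.continuousAt.tendsto.mono_left nhdsWithin_le_nhds :
      Tendsto f (𝓝[>] 0) _).sub_const (f 0)
    rwa [sub_self] at this
  have hsq : Tendsto (fun x : ℝ ↦ x ^ 2) (𝓝[>] 0) (𝓝 0) := by
    have : ContinuousAt (fun x : ℝ ↦ x ^ 2) 0 := by fun_prop
    simpa using this.tendsto.mono_left nhdsWithin_le_nhds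
  refine HasDerivAt.lhopital_zero_nhdsGT (f' := f') (g' := fun x ↦ 2 * x) ?_ ?_ ?_ hcont hsq hslope
  · exact (hf.filter_mono nhdsWithin_le_nhds).mono fun x hx ↦ hx.sub_const _
  · exact .of_forall fun x ↦ by simpa using hasDerivAt_pow 2 x
  · filter_upwards [self_mem_nhdsWithin] with x hx
    exact mul_ne_zero two_ne_zero (ne_of_gt hx)

section MomentGeneratingFunction

open ProbabilityTheory

variable {Ω : Type*} [MeasurableSpace Ω] {μ : Measure Ω} {X Y : Ω → ℝ}

theorem tendsto_mgf_mul_mgf_neg_sub_div_sq (hX : 0 ∈ interior (integrableExpSet X μ)) :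
    Tendsto (fun ε ↦ (mgf X μ ε * mgf X μ (-ε) - μ.real univ ^ 2) / ε ^ 2) (𝓝[>] 0)
      (𝓝 (μ.real univ * μ[X ^ 2] - μ[X] ^ 2)) := by
  set L := mgf X μ
  set L' := deriv L
  have hL : ∀ᶠ ε in 𝓝 0, HasDerivAt L (L' ε) ε := by
    filter_upwards [isOpen_interior.mem_nhds hX] with ε hε
    exact (differentiableAt_mgf hε).hasDerivAt
  have hL' : HasDerivAt L' μ[X ^ 2] 0 := by
    simpa [L', iteratedDeriv_one] using hasDerivAt_iteratedDeriv_mgf hX 1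
  have hneg : Tendsto Neg.neg (𝓝 (0 : ℝ)) (𝓝 0) := by
    simpa using (continuous_neg (G := ℝ)).tendsto 0
  have hderiv : ∀ᶠ ε in 𝓝 0, HasDerivAt (fun ε ↦ L ε * L (-ε))
      (L' ε * L (-ε) - L ε * L' (-ε)) ε := by
    filter_upwards [hL, hneg.eventually hL] with ε hε hε'
    have hLneg : HasDerivAt (fun ε ↦ L (-ε)) (-L' (-ε)) ε := by
      simpa [Function.comp_def] using hε'.comp ε (hasDerivAt_neg ε)
    simpa [sub_eq_add_neg] using hε.fun_mul hLneg
  have hderiv₂ : HasDerivAt (fun ε ↦ L' ε * L (-ε) - L ε * L' (-ε))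
      (2 * (μ.real univ * μ[X ^ 2] - μ[X] ^ 2)) 0 := by
    have hL'₀ : L' 0 = μ[X] := deriv_mgf_zero hX
    have hLneg : HasDerivAt (fun ε ↦ L (-ε)) (-L' 0) 0 := by
      simpa [Function.comp_def] using hL.self_of_nhds.comp_of_eq 0 (hasDerivAt_neg 0) neg_zero.symm
    have hL'neg : HasDerivAt (fun ε ↦ L' (-ε)) (-μ[X ^ 2]) 0 := by
      simpa [Function.comp_def] using hL'.comp_of_eq 0 (hasDerivAt_neg 0) neg_zero.symm
    refine ((hL'.fun_mul hLneg).fun_sub (hL.self_of_nhds.fun_mul hL'neg)).congr_deriv ?_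
    simp only [neg_zero, hL'₀, L, mgf_zero']
    ring
  have := tendsto_sub_div_sq_of_hasDerivAt hderiv (by simp [mul_comm]) hderiv₂
  rw [mul_div_cancel_left₀ _ two_ne_zero] at this
  simpa [L, mgf_zero', sq] using this

theorem tendsto_mgf_mul_sq_sub_div_sq (hY : 0 ∈ interior (integrableExpSet Y μ)) (κ : ℝ) :
    Tendsto (fun ε ↦ (mgf Y μ (κ * ε ^ 2) ^ 2 - μ.real univ ^ 2) / ε ^ 2) (𝓝[>] 0)
      (𝓝 (2 * κ * μ.real univ * μ[Y])) := by
  have hderiv : HasDerivAt (fun t ↦ mgf Y μ (κ * t) ^ 2) (2 * κ * μ.real univ * μ[Y]) 0 := by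
    have hmgf : HasDerivAt (mgf Y μ) μ[Y] 0 := by simpa using hasDerivAt_mgf hY
    refine ((hmgf.comp_of_eq 0 ((hasDerivAt_id (0 : ℝ)).const_mul κ) (by simp)).fun_pow
      2).congr_deriv ?_
    simp only [Function.comp_apply, id_eq, mul_zero, mgf_zero']
    ring
  have hsq : Tendsto (fun ε : ℝ ↦ ε ^ 2) (𝓝[>] 0) (𝓝[≠] 0) := by
    refine tendsto_nhdsWithin_iff.2 ⟨?_, ?_⟩
    · have : ContinuousAt (fun x : ℝ ↦ x ^ 2) 0 := by fun_prop
      simpa using this.tendsto.mono_left nhdsWithin_le_nhds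
    · filter_upwards [self_mem_nhdsWithin] with ε hε using pow_ne_zero 2 (ne_of_gt hε)
  refine (hderiv.tendsto_slope.comp hsq).congr fun ε ↦ ?_
  simp [slope_def_field]

theorem variance_le_of_mgf_mul_mgf_neg_le (hX : 0 ∈ interior (integrableExpSet X μ))
    (hY : 0 ∈ interior (integrableExpSet Y μ)) {κ : ℝ}
    (h : ∀ᶠ ε in 𝓝[>] 0, mgf X μ ε * mgf X μ (-ε) ≤ mgf Y μ (κ * ε ^ 2) ^ 2) :
    μ.real univ * μ[X ^ 2] - μ[X] ^ 2 ≤ 2 * κ * μ.real univ * μ[Y] := by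
  refine le_of_tendsto_of_tendsto (tendsto_mgf_mul_mgf_neg_sub_div_sq hX)
    (tendsto_mgf_mul_sq_sub_div_sq hY κ) ?_
  filter_upwards [h] with ε hε
  gcongr

theorem ofReal_mgf {t : ℝ} (ht : Integrable (fun ω ↦ Real.exp (t * X ω)) μ) :
    ENNReal.ofReal (mgf X μ t) = ∫⁻ ω, ENNReal.ofReal (Real.exp (t * X ω)) ∂μ :=
  ofReal_integral_eq_lintegral_ofReal ht (ae_of_all _ fun _ ↦ (Real.exp_pos _).le)

theorem integrableExpSet_eq_univ_of_abs_le [IsFiniteMeasure μ] (hX : AEMeasurable X μ) {B : ℝ}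
    (hB : ∀ ω, |X ω| ≤ B) : integrableExpSet X μ = univ :=
  eq_univ_of_forall fun _ ↦
    integrable_exp_mul_of_mem_Icc hX (ae_of_all _ fun ω ↦ abs_le.1 (hB ω))

end MomentGeneratingFunction

section Taylor

variable {E F : Type*} [NormedAddCommGroup E] [NormedSpace ℝ E] [NormedAddCommGroup F]
  [NormedSpace ℝ F] {f : E → F} {M : ℝ≥0}

theorem norm_add_sub_sub_fderiv_le (hf : Differentiable ℝ f) (hM : LipschitzWith M (fderiv ℝ f))
    (x d : E) : ‖f (x + d) - f x - fderiv ℝ f x d‖ ≤ M * ‖d‖ ^ 2 := by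
  have hbound : ∀ y ∈ Metric.closedBall x ‖d‖, ‖fderiv ℝ f y - fderiv ℝ f x‖ ≤ M * ‖d‖ := by
    intro y hy
    rw [← dist_eq_norm]
    exact (hM.dist_le_mul y x).trans (by gcongr; exact hy)
  have := (convex_closedBall x ‖d‖).norm_image_sub_le_of_norm_hasFDerivWithin_le'
    (fun y _ ↦ (hf y).hasFDerivAt.hasFDerivWithinAt) hbound
    (Metric.mem_closedBall_self (norm_nonneg d)) (y := x + d) (by simp)
  rwa [add_sub_cancel_left, mul_assoc, ← sq] at this

theorem norm_add_sub_sub_le (hf : Differentiable ℝ f) (hM : LipschitzWith M (fderiv ℝ f))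
    (x d : E) : ‖f (x + d) - f (x - d)‖ ≤ 2 * ‖fderiv ℝ f x‖ * ‖d‖ + 2 * M * ‖d‖ ^ 2 := by
  have hplus := norm_add_sub_sub_fderiv_le hf hM x d
  have hminus := norm_add_sub_sub_fderiv_le hf hM x (-d)
  rw [norm_neg, map_neg, ← sub_eq_add_neg] at hminus
  have hlin := (fderiv ℝ f x).le_opNorm d
  calc ‖f (x + d) - f (x - d)‖
    _ = ‖(f (x + d) - f x - fderiv ℝ f x d) - (f (x - d) - f x - -fderiv ℝ f x d)
          + (fderiv ℝ f x d + fderiv ℝ f x d)‖ := by congr 1; abel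
    _ ≤ (M * ‖d‖ ^ 2 + M * ‖d‖ ^ 2) +
          (‖fderiv ℝ f x‖ * ‖d‖ + ‖fderiv ℝ f x‖ * ‖d‖) :=
        (norm_add_le _ _).trans (add_le_add ((norm_sub_le _ _).trans (add_le_add hplus hminus))
          ((norm_add_le _ _).trans (add_le_add hlin hlin)))
    _ = 2 * ‖fderiv ℝ f x‖ * ‖d‖ + 2 * M * ‖d‖ ^ 2 := by ring

theorem eventually_mul_sub_le {φ : E → ℝ} (hφ : Differentiable ℝ φ)
    (hM : LipschitzWith M (fderiv ℝ φ)) {κ : ℝ} (hκ : 1 / 2 < κ) :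
    ∀ᶠ ε in 𝓝[>] (0 : ℝ), ∀ z d,
      ε * (φ (z + d) - φ (z - d)) ≤ 2 * (κ * ε ^ 2 * ‖fderiv ℝ φ z‖ ^ 2) + ‖d‖ ^ 2 := by
  have hlim : Tendsto (fun ε : ℝ ↦ 1 / (2 * κ) + 2 * M * ε) (𝓝[>] 0) (𝓝 (1 / (2 * κ))) := by
    have : ContinuousAt (fun ε : ℝ ↦ 1 / (2 * κ) + 2 * M * ε) 0 := by fun_prop
    simpa using this.tendsto.mono_left nhdsWithin_le_nhds
  have hκ₁ : 1 / (2 * κ) < 1 := by rw [div_lt_one] <;> linarith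
  filter_upwards [hlim.eventually_lt_const hκ₁, self_mem_nhdsWithin] with ε hε (hε₀ : 0 < ε) z d
  have htaylor : φ (z + d) - φ (z - d) ≤ 2 * ‖fderiv ℝ φ z‖ * ‖d‖ + 2 * M * ‖d‖ ^ 2 :=
    (le_abs_self _).trans (norm_add_sub_sub_le hφ hM z d)
  have hyoung : 2 * (ε * ‖fderiv ℝ φ z‖ * ‖d‖) ≤
      2 * (κ * ε ^ 2 * ‖fderiv ℝ φ z‖ ^ 2) + 1 / (2 * κ) * ‖d‖ ^ 2 := by
    have hκ₀ : 0 < 2 * κ := by linarith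
    have := div_nonneg (sq_nonneg (2 * κ * (ε * ‖fderiv ℝ φ z‖) - ‖d‖)) hκ₀.le
    field_simp at this ⊢
    linarith
  calc ε * (φ (z + d) - φ (z - d))
    _ ≤ ε * (2 * ‖fderiv ℝ φ z‖ * ‖d‖ + 2 * M * ‖d‖ ^ 2) := by gcongr
    _ = 2 * (ε * ‖fderiv ℝ φ z‖ * ‖d‖) + 2 * M * ε * ‖d‖ ^ 2 := by ring
    _ ≤ 2 * (κ * ε ^ 2 * ‖fderiv ℝ φ z‖ ^ 2) + (1 / (2 * κ) + 2 * M * ε) * ‖d‖ ^ 2 := by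
        linarith
    _ ≤ 2 * (κ * ε ^ 2 * ‖fderiv ℝ φ z‖ ^ 2) + ‖d‖ ^ 2 := by
        gcongr
        exact mul_le_of_le_one_left (sq_nonneg _) hε.le

end Taylor

/-- Midpoint log-concavity of the weight `w` with the modulus of the standard Gaussian, i.e.
`log w + ‖·‖² / 2` is midpoint concave. -/
def IsStronglyLogConcave {E : Type*} [NormedAddCommGroup E] (w : E → ℝ≥0∞) : Prop :=
  ∀ z d, w (z + d) * w (z - d) ≤ w z ^ 2 * ENNReal.ofReal (Real.exp (-‖d‖ ^ 2))

namespace IsStronglyLogConcave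

section NormedSpace

variable {E : Type*} [NormedAddCommGroup E] [NormedSpace ℝ E] {w : E → ℝ≥0∞}

theorem indicator (hw : IsStronglyLogConcave w) {K : Set E} (hK : Convex ℝ K) :
    IsStronglyLogConcave (K.indicator w) := by
  intro z d
  by_cases hadd : z + d ∈ K
  swap
  · simp [hadd]
  by_cases hsub : z - d ∈ K
  swap
  · simp [hsub]
  have hz : z ∈ K := midpoint_add_sub (R := ℝ) z d ▸ hK.midpoint_mem hadd hsub
  simpa [hadd, hsub, hz] using hw z d

variable [MeasurableSpace E] {μ : Measure E}

theorem lintegral_mul_lintegral_le (hw : IsStronglyLogConcave w) (hwm : Measurable w)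
    (hμ : PrekopaLeindler μ) {f g h : E → ℝ≥0∞} (hf : Measurable f) (hg : Measurable g)
    (hh : Measurable h)
    (hmul : ∀ z d, f (z + d) * g (z - d) ≤ h z ^ 2 * ENNReal.ofReal (Real.exp (‖d‖ ^ 2))) :
    (∫⁻ x, f x ∂μ.withDensity w) * (∫⁻ x, g x ∂μ.withDensity w) ≤
      (∫⁻ x, h x ∂μ.withDensity w) ^ 2 := by
  simp only [lintegral_withDensity_eq_lintegral_mul μ hwm, hf, hg, hh]
  refine hμ (hwm.mul hf) (hwm.mul hg) (hwm.mul hh) fun x y ↦ ?_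
  obtain ⟨z, d, rfl, rfl⟩ : ∃ z d, x = z + d ∧ y = z - d :=
    ⟨(1 / 2 : ℝ) • (x + y), (1 / 2 : ℝ) • (x - y), by module, by module⟩
  simp only [midpoint_add_sub, Pi.mul_apply]
  calc w (z + d) * f (z + d) * (w (z - d) * g (z - d))
    _ = w (z + d) * w (z - d) * (f (z + d) * g (z - d)) := by ring
    _ ≤ w z ^ 2 * ENNReal.ofReal (Real.exp (-‖d‖ ^ 2)) *
          (h z ^ 2 * ENNReal.ofReal (Real.exp (‖d‖ ^ 2))) := mul_le_mul' (hw z d) (hmul z d)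
    _ = (w z * h z) ^ 2 *
          ENNReal.ofReal (Real.exp (-‖d‖ ^ 2) * Real.exp (‖d‖ ^ 2)) := by
        rw [ENNReal.ofReal_mul (Real.exp_pos _).le]; ring
    _ = (w z * h z) ^ 2 := by simp [← Real.exp_add]

open ProbabilityTheory in
theorem mgf_mul_mgf_neg_le (hw : IsStronglyLogConcave w) (hwm : Measurable w)
    (hμ : PrekopaLeindler μ) {φ ψ : E → ℝ} (hφ : Measurable φ) (hψ : Measurable ψ) {s t : ℝ}
    (hs : s ∈ integrableExpSet φ (μ.withDensity w))
    (hs' : -s ∈ integrableExpSet φ (μ.withDensity w))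
    (ht : t ∈ integrableExpSet ψ (μ.withDensity w))
    (h : ∀ z d, s * (φ (z + d) - φ (z - d)) ≤ 2 * (t * ψ z) + ‖d‖ ^ 2) :
    mgf φ (μ.withDensity w) s * mgf φ (μ.withDensity w) (-s) ≤ mgf ψ (μ.withDensity w) t ^ 2 := by
  rw [← ENNReal.ofReal_le_ofReal_iff (by positivity), ENNReal.ofReal_mul mgf_nonneg,
    ENNReal.ofReal_pow mgf_nonneg, ofReal_mgf hs, ofReal_mgf hs', ofReal_mgf ht]
  refine hw.lintegral_mul_lintegral_le hwm hμ (by fun_prop) (by fun_prop) (by fun_prop) fun z d ↦ ?_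
  rw [← ENNReal.ofReal_mul (by positivity), ← ENNReal.ofReal_pow (by positivity),
    ← ENNReal.ofReal_mul (by positivity), ← Real.exp_add, ← Real.exp_nat_mul, ← Real.exp_add]
  refine ENNReal.ofReal_le_ofReal (Real.exp_le_exp.2 ?_)
  push_cast
  linarith [h z d]

theorem variance_le_integral_norm_fderiv_sq [BorelSpace E] (hw : IsStronglyLogConcave w)
    (hwm : Measurable w) (hμ : PrekopaLeindler μ) [IsFiniteMeasure (μ.withDensity w)] {φ : E → ℝ}
    (hφ : ContDiff ℝ 2 φ) (hφc : HasCompactSupport φ) :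
    (μ.withDensity w).real univ * ∫ x, φ x ^ 2 ∂μ.withDensity w - (∫ x, φ x ∂μ.withDensity w) ^ 2 ≤
      (μ.withDensity w).real univ * ∫ x, ‖fderiv ℝ φ x‖ ^ 2 ∂μ.withDensity w := by
  set ν := μ.withDensity w
  have hφ' : ContDiff ℝ 1 (fderiv ℝ φ) := hφ.fderiv_right (by norm_num)
  obtain ⟨B, hB⟩ := hφc.exists_bound_of_continuous hφ.continuous
  obtain ⟨B', hB'⟩ := (hφc.fderiv ℝ).exists_bound_of_continuous hφ'.continuous
  obtain ⟨M, hM⟩ := hφ'.lipschitzWith_of_hasCompactSupport (hφc.fderiv ℝ) one_ne_zero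
  have hφm : Measurable φ := hφ.continuous.measurable
  have hGm : Measurable fun x ↦ ‖fderiv ℝ φ x‖ ^ 2 := (hφ'.continuous.norm.pow 2).measurable
  have hexp : ProbabilityTheory.integrableExpSet φ ν = univ :=
    integrableExpSet_eq_univ_of_abs_le hφm.aemeasurable hB
  have hexp' : ProbabilityTheory.integrableExpSet (fun x ↦ ‖fderiv ℝ φ x‖ ^ 2) ν = univ := by
    refine integrableExpSet_eq_univ_of_abs_le hGm.aemeasurable (B := B' ^ 2) fun x ↦ ?_
    rw [abs_of_nonneg (by positivity)]
    gcongr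
    exact hB' x
  have hκ {κ : ℝ} (hκ : 1 / 2 < κ) : ν.real univ * ∫ x, φ x ^ 2 ∂ν - (∫ x, φ x ∂ν) ^ 2 ≤
      2 * κ * ν.real univ * ∫ x, ‖fderiv ℝ φ x‖ ^ 2 ∂ν := by
    refine variance_le_of_mgf_mul_mgf_neg_le (by simp [hexp]) (by simp [hexp']) ?_
    filter_upwards [eventually_mul_sub_le (hφ.differentiable two_ne_zero) hM hκ] with ε hε
    exact hw.mgf_mul_mgf_neg_le hwm hμ hφm hGm (by simp [hexp, ν]) (by simp [hexp, ν])
      (by simp [hexp', ν]) hε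
  have hlim : Tendsto (fun κ ↦ 2 * κ * ν.real univ * ∫ x, ‖fderiv ℝ φ x‖ ^ 2 ∂ν) (𝓝[>] (1 / 2))
      (𝓝 (2 * (1 / 2) * ν.real univ * ∫ x, ‖fderiv ℝ φ x‖ ^ 2 ∂ν)) :=
    (Continuous.tendsto (by fun_prop) _).mono_left nhdsWithin_le_nhds
  simpa using ge_of_tendsto hlim (eventually_mem_nhdsWithin.mono fun _ ↦ hκ)

end NormedSpace

end IsStronglyLogConcave

theorem lintegral_prod_enorm_sub_sq {α : Type*} [MeasurableSpace α] {μ : Measure α}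
    [IsFiniteMeasure μ] {f : α → ℝ} (hf : MemLp f 2 μ) :
    ∫⁻ p : α × α, ‖f p.1 - f p.2‖ₑ ^ 2 ∂μ.prod μ =
      ENNReal.ofReal (2 * (μ.real univ * ∫ x, f x ^ 2 ∂μ - (∫ x, f x ∂μ) ^ 2)) := by
  have hf₁ : Integrable f μ := hf.integrable one_le_two
  have hfst : Integrable (fun p : α × α ↦ f p.1 ^ 2) (μ.prod μ) := hf.integrable_sq.comp_fst μ
  have hsnd : Integrable (fun p : α × α ↦ f p.2 ^ 2) (μ.prod μ) := hf.integrable_sq.comp_snd μ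
  have hmul : Integrable (fun p : α × α ↦ f p.1 * f p.2) (μ.prod μ) := hf₁.mul_prod hf₁
  have hexpand (p : α × α) : (f p.1 - f p.2) ^ 2 =
      f p.1 ^ 2 + f p.2 ^ 2 - 2 * (f p.1 * f p.2) := by ring
  have henorm (p : α × α) : ‖f p.1 - f p.2‖ₑ ^ 2 = ENNReal.ofReal ((f p.1 - f p.2) ^ 2) := by
    rw [Real.enorm_eq_ofReal_abs, ← ENNReal.ofReal_pow (abs_nonneg _), sq_abs]
  have hint : Integrable (fun p : α × α ↦ (f p.1 - f p.2) ^ 2) (μ.prod μ) := by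
    simp only [hexpand]
    exact (hfst.add hsnd).sub (hmul.const_mul 2)
  simp only [henorm]
  rw [← ofReal_integral_eq_lintegral_ofReal hint (ae_of_all _ fun p ↦ sq_nonneg _)]
  congr 1
  calc ∫ p : α × α, (f p.1 - f p.2) ^ 2 ∂μ.prod μ
    _ = ∫ p : α × α, f p.1 ^ 2 ∂μ.prod μ + ∫ p : α × α, f p.2 ^ 2 ∂μ.prod μ -
          2 * ∫ p : α × α, f p.1 * f p.2 ∂μ.prod μ := by
        simp only [hexpand]
        rw [integral_sub (hfst.fun_add hsnd) (hmul.const_mul 2), integral_add hfst hsnd,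
          integral_const_mul]
    _ = μ.real univ * ∫ x, f x ^ 2 ∂μ + μ.real univ * ∫ x, f x ^ 2 ∂μ -
          2 * ((∫ x, f x ∂μ) * ∫ x, f x ∂μ) := by
        rw [integral_fun_fst (fun x ↦ f x ^ 2), integral_fun_snd (fun x ↦ f x ^ 2),
          integral_prod_mul]
        simp only [smul_eq_mul]
    _ = 2 * (μ.real univ * ∫ x, f x ^ 2 ∂μ - (∫ x, f x ∂μ) ^ 2) := by ring

/-! ### Approximation by smooth functions -/

theorem sq_lintegral_le_lintegral_sq {α : Type*} [MeasurableSpace α] {π : Measure α}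
    [IsProbabilityMeasure π] {u : α → ℝ≥0∞} (hu : AEMeasurable u π) :
    (∫⁻ x, u x ∂π) ^ 2 ≤ ∫⁻ x, u x ^ 2 ∂π := by
  have holder := ENNReal.lintegral_mul_le_Lp_mul_Lq π Real.HolderConjugate.two_two hu
    (aemeasurable_const (b := 1))
  simp only [Pi.mul_apply, mul_one, one_pow, ENNReal.one_rpow, lintegral_one, measure_univ,
    ENNReal.rpow_two] at holder
  calc (∫⁻ x, u x ∂π) ^ 2 ≤ ((∫⁻ x, u x ^ 2 ∂π) ^ (1 / 2 : ℝ)) ^ 2 := by gcongr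
    _ = ∫⁻ x, u x ^ 2 ∂π := by rw [← ENNReal.rpow_mul_natCast]; norm_num

section Convolution

open ContinuousLinearMap
open scoped Convolution

theorem fderiv_convolution_of_differentiable {E F : Type*} [NormedAddCommGroup E] [NormedSpace ℝ E]
    [FiniteDimensional ℝ E] [MeasurableSpace E] [BorelSpace E] [NormedAddCommGroup F]
    [NormedSpace ℝ F] {μ : Measure E} [μ.IsAddHaarMeasure] {η : E → ℝ} {g : E → F}
    (hη : ContDiff ℝ 1 η) (hηc : HasCompactSupport η) (hg : Differentiable ℝ g)
    (hg' : LocallyIntegrable (fderiv ℝ g) μ) (x : E) :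
    fderiv ℝ (η ⋆[lsmul ℝ ℝ, μ] g) x = ∫ t, η t • fderiv ℝ g (x - t) ∂μ := by
  have hgi : LocallyIntegrable g μ := hg.continuous.locallyIntegrable
  have hη' : Continuous (fderiv ℝ η) := hη.continuous_fderiv one_ne_zero
  have hleft := (hηc.fderiv ℝ).convolutionExists_left (μ := μ)
    ((lsmul ℝ ℝ : ℝ →L[ℝ] F →L[ℝ] F).precompL E) hη' hgi x
  have hright : Integrable (fun t ↦ η t • fderiv ℝ g (x - t)) μ :=
    hηc.convolutionExists_left (lsmul ℝ ℝ : ℝ →L[ℝ] (E →L[ℝ] F) →L[ℝ] _) hη.continuous hg' x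
  have hprod : Integrable (fun t ↦ η t • g (x - t)) μ :=
    hηc.convolutionExists_left (lsmul ℝ ℝ : ℝ →L[ℝ] F →L[ℝ] F) hη.continuous hgi x
  have hcomp (t : E) : HasFDerivAt (fun t ↦ g (x - t)) (-fderiv ℝ g (x - t)) t := by
    simpa [Function.comp_def] using (hg (x - t)).hasFDerivAt.comp t ((hasFDerivAt_id t).const_sub x)
  rw [(hηc.hasFDerivAt_convolution_left (lsmul ℝ ℝ) hη hgi x).fderiv, convolution_def]
  ext v
  have hparts := integral_smul_fderiv_eq_neg_fderiv_smul_of_integrable (μ := μ) (v := v)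
    (f := η) (g := fun t ↦ g (x - t)) (hleft.integrable.apply_continuousLinearMap v)
    (by simpa [(hcomp _).fderiv] using (hright.apply_continuousLinearMap v).neg) hprod
    (fun t _ ↦ hη.differentiable one_ne_zero t) (fun t _ ↦ (hcomp t).differentiableAt)
  simp only [(hcomp _).fderiv, neg_apply, smul_neg, integral_neg, neg_inj] at hparts
  rw [integral_apply hleft.integrable, integral_apply hright]
  exact hparts.symm

theorem measurable_ofReal_bump_normed {E : Type*} [NormedAddCommGroup E] [NormedSpace ℝ E]
    [HasContDiffBump E] [MeasurableSpace E] [BorelSpace E] {μ : Measure E}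
    (b : ContDiffBump (0 : E)) : Measurable fun t ↦ ENNReal.ofReal (b.normed μ t) :=
  (b.contDiff_normed (n := 0)).continuous.measurable.ennreal_ofReal

variable {E F : Type*} [NormedAddCommGroup E] [NormedSpace ℝ E] [FiniteDimensional ℝ E]
  [MeasurableSpace E] [BorelSpace E] [NormedAddCommGroup F] [NormedSpace ℝ F] [CompleteSpace F]
  {μ : Measure E} [μ.IsAddHaarMeasure]

/-- The probability measure whose density with respect to `μ` is the normalized bump function `b`:
convolving with `b.normed μ` averages translates against this measure. -/
def bumpMeasure (b : ContDiffBump (0 : E)) (μ : Measure E) : Measure E :=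
  μ.withDensity fun t ↦ ENNReal.ofReal (b.normed μ t)

instance isProbabilityMeasure_bumpMeasure (b : ContDiffBump (0 : E)) :
    IsProbabilityMeasure (bumpMeasure b μ) := by
  refine ⟨?_⟩
  rw [bumpMeasure, withDensity_apply _ MeasurableSet.univ, Measure.restrict_univ,
    ← ofReal_integral_eq_lintegral_ofReal b.integrable_normed (ae_of_all _ b.nonneg_normed),
    b.integral_normed, ENNReal.ofReal_one]

theorem ae_norm_lt_bumpMeasure (b : ContDiffBump (0 : E)) :
    ∀ᵐ t ∂bumpMeasure b μ, ‖t‖ < b.rOut := by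
  refine (ae_withDensity_iff (measurable_ofReal_bump_normed b)).2 (ae_of_all _ fun t ht ↦ ?_)
  have hsupp : t ∈ Function.support (b.normed μ) := fun h ↦ ht (by rw [h, ENNReal.ofReal_zero])
  rwa [b.support_normed_eq, mem_ball_zero_iff] at hsupp

theorem enorm_fderiv_convolution_bump_sq_le (b : ContDiffBump (0 : E)) {g : E → F}
    (hg : Differentiable ℝ g) (hg' : LocallyIntegrable (fderiv ℝ g) μ) (x : E) :
    ‖fderiv ℝ (b.normed μ ⋆[lsmul ℝ ℝ, μ] g) x‖ₑ ^ 2 ≤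
      ∫⁻ t, ‖fderiv ℝ g (x - t)‖ₑ ^ 2 ∂bumpMeasure b μ := by
  have hmeas : Measurable fun t ↦ ‖fderiv ℝ g (x - t)‖ₑ :=
    (measurable_fderiv ℝ g).enorm.comp (measurable_const.sub measurable_id)
  calc ‖fderiv ℝ (b.normed μ ⋆[lsmul ℝ ℝ, μ] g) x‖ₑ ^ 2
    _ = ‖∫ t, b.normed μ t • fderiv ℝ g (x - t) ∂μ‖ₑ ^ 2 := by
        rw [fderiv_convolution_of_differentiable b.contDiff_normed b.hasCompactSupport_normed
          hg hg']
    _ ≤ (∫⁻ t, ‖b.normed μ t • fderiv ℝ g (x - t)‖ₑ ∂μ) ^ 2 := by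
        gcongr
        exact enorm_integral_le_lintegral_enorm _
    _ = (∫⁻ t, ‖fderiv ℝ g (x - t)‖ₑ ∂bumpMeasure b μ) ^ 2 := by
        rw [bumpMeasure, lintegral_withDensity_eq_lintegral_mul _
          (measurable_ofReal_bump_normed b) hmeas]
        simp only [enorm_smul, Real.enorm_of_nonneg (b.nonneg_normed _), Pi.mul_apply]
    _ ≤ ∫⁻ t, ‖fderiv ℝ g (x - t)‖ₑ ^ 2 ∂bumpMeasure b μ :=
        sq_lintegral_le_lintegral_sq hmeas.aemeasurable

theorem lintegral_enorm_fderiv_convolution_bump_sq_le {ν : Measure E} [SFinite ν]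
    (b : ContDiffBump (0 : E)) {g : E → F} (hg : Differentiable ℝ g)
    (hg' : LocallyIntegrable (fderiv ℝ g) μ) {A : ℝ≥0∞}
    (hA : ∀ t, ‖t‖ < b.rOut → ∫⁻ x, ‖fderiv ℝ g (x - t)‖ₑ ^ 2 ∂ν ≤ A) :
    ∫⁻ x, ‖fderiv ℝ (b.normed μ ⋆[lsmul ℝ ℝ, μ] g) x‖ₑ ^ 2 ∂ν ≤ A := by
  have hmeas : Measurable fun p : E × E ↦ ‖fderiv ℝ g (p.1 - p.2)‖ₑ ^ 2 :=
    ((measurable_fderiv ℝ g).enorm.pow_const 2).comp (measurable_fst.sub measurable_snd)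
  calc ∫⁻ x, ‖fderiv ℝ (b.normed μ ⋆[lsmul ℝ ℝ, μ] g) x‖ₑ ^ 2 ∂ν
    _ ≤ ∫⁻ x, ∫⁻ t, ‖fderiv ℝ g (x - t)‖ₑ ^ 2 ∂bumpMeasure b μ ∂ν :=
        lintegral_mono fun x ↦ enorm_fderiv_convolution_bump_sq_le b hg hg' x
    _ = ∫⁻ t, ∫⁻ x, ‖fderiv ℝ g (x - t)‖ₑ ^ 2 ∂ν ∂bumpMeasure b μ :=
        lintegral_lintegral_swap hmeas.aemeasurable
    _ ≤ ∫⁻ _, A ∂bumpMeasure b μ :=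
        lintegral_mono_ae ((ae_norm_lt_bumpMeasure b).mono fun t ht ↦ hA t ht)
    _ = A := by rw [lintegral_const, measure_univ, mul_one]

end Convolution

section Approximation

theorem eventually_forall_mem_and_le_mul_comp_sub {G : Type*} [TopologicalSpace G] [AddGroup G]
    [IsTopologicalAddGroup G] {w : G → ℝ≥0} {C U : Set G} (hw : Continuous w) (hC : IsCompact C)
    (hwC : ∀ x ∈ C, w x ≠ 0) (hU : IsOpen U) (hCU : C ⊆ U) {c : ℝ≥0} (hc : 1 < c) :
    ∀ᶠ t in 𝓝 0, ∀ x ∈ C, x - t ∈ U ∧ w x ≤ c * w (x - t) := by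
  refine hC.eventually_forall_of_forall_eventually fun x hx ↦ ?_
  have hsub : Tendsto (fun p : G × G ↦ p.2 - p.1) (𝓝 (0, x)) (𝓝 x) :=
    Continuous.tendsto' (by fun_prop) _ _ (by simp)
  have hlt : w x < c * w x := lt_mul_of_one_lt_left (pos_iff_ne_zero.2 (hwC x hx)) hc
  have hright : Tendsto (fun p : G × G ↦ c * w (p.2 - p.1)) (𝓝 (0, x)) (𝓝 (c * w x)) :=
    ((hw.tendsto x).comp hsub).const_mul c
  have hleft : Tendsto (fun p : G × G ↦ w p.2) (𝓝 (0, x)) (𝓝 (w x)) :=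
    (hw.comp continuous_snd).tendsto (0, x)
  exact (hsub.eventually_mem (hU.mem_nhds (hCU hx))).and
    ((hleft.eventually_lt hright hlt).mono fun _ ↦ le_of_lt)

theorem setLIntegral_comp_sub_le {G : Type*} [MeasurableSpace G] [AddGroup G] [MeasurableAdd₂ G]
    [MeasurableNeg G] {μ : Measure G} [μ.IsAddRightInvariant] {w : G → ℝ≥0} {C U : Set G}
    (hw : Measurable w) (hC : MeasurableSet C) (hU : MeasurableSet U) {c : ℝ≥0} {t : G}
    (ht : ∀ x ∈ C, x - t ∈ U ∧ w x ≤ c * w (x - t)) {u : G → ℝ≥0∞} (hu : Measurable u) :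
    ∫⁻ x in C, u (x - t) ∂(μ.withDensity fun x ↦ (w x : ℝ≥0∞)) ≤
      c * ∫⁻ x in U, u x ∂(μ.withDensity fun x ↦ (w x : ℝ≥0∞)) := by
  have hw' : Measurable fun x ↦ (w x : ℝ≥0∞) := hw.coe_nnreal_ennreal
  rw [setLIntegral_withDensity_eq_setLIntegral_mul μ hw' (by fun_prop) hC,
    setLIntegral_withDensity_eq_setLIntegral_mul μ hw' hu hU, ← lintegral_const_mul _ (by fun_prop),
    ← lintegral_indicator hC, ← lintegral_indicator hU]
  rw [← lintegral_sub_right_eq_self (U.indicator _) t]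
  refine lintegral_mono fun x ↦ indicator_apply_le' (fun hx ↦ ?_) fun _ ↦ zero_le
  obtain ⟨hxU, hwx⟩ := ht x hx
  rw [indicator_of_mem hxU, Pi.mul_apply, Pi.mul_apply, ← mul_assoc]
  gcongr
  exact ENNReal.coe_le_coe.2 hwx |>.trans_eq (ENNReal.coe_mul _ _)

variable {E F : Type*} [NormedAddCommGroup E] [NormedSpace ℝ E] [FiniteDimensional ℝ E]
  [MeasurableSpace E] [BorelSpace E] [NormedAddCommGroup F] [NormedSpace ℝ F]
  {μ : Measure E} [μ.IsAddHaarMeasure] {w : E → ℝ≥0} {C K U : Set E}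

theorem locallyIntegrableOn_of_memLp_withDensity {G : Type*} [NormedAddCommGroup G]
    (hw : Continuous w) (hK : IsLocallyClosed K) (hwK : ∀ x ∈ K, w x ≠ 0) {u : E → G}
    (hu : MemLp u 2 ((μ.withDensity fun x ↦ (w x : ℝ≥0∞)).restrict K)) :
    LocallyIntegrableOn u K μ := by
  refine (locallyIntegrableOn_iff hK).2 fun k hkK hk ↦ ?_
  obtain ⟨m, hm, hmw⟩ := hk.exists_forall_le' hw.continuousOn
    fun x hx ↦ pos_iff_ne_zero.2 (hwK x (hkK hx))
  have hle : μ.restrict k ≤ (m : ℝ≥0∞)⁻¹ • (μ.withDensity fun x ↦ (w x : ℝ≥0∞)).restrict k := by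
    rw [restrict_withDensity hk.measurableSet,
      ← withDensity_smul _ hw.measurable.coe_nnreal_ennreal]
    nth_rw 1 [← withDensity_one (μ := μ.restrict k)]
    refine withDensity_mono (ae_restrict_of_forall_mem hk.measurableSet fun x hx ↦ ?_)
    have hm' : (m : ℝ≥0∞) ≠ 0 := by exact_mod_cast hm.ne'
    calc (1 : ℝ≥0∞) = (m : ℝ≥0∞)⁻¹ * m := (ENNReal.inv_mul_cancel hm' ENNReal.coe_ne_top).symm
      _ ≤ (m : ℝ≥0∞)⁻¹ * w x := by gcongr; exact hmw x hx
  have hmem : MemLp u 2 (μ.restrict k) :=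
    (hu.mono_measure (Measure.restrict_mono_set _ hkK)).of_measure_le_smul
      (ENNReal.inv_ne_top.2 (by exact_mod_cast hm.ne')) hle
  have : IsFiniteMeasure (μ.restrict k) := ⟨by simpa using hk.measure_lt_top⟩
  exact hmem.integrable one_le_two

theorem exists_differentiable_eqOn_nhds (hC : IsCompact C) (hK : IsOpen K) (hCK : C ⊆ K)
    {f : E → F} (hf : DifferentiableOn ℝ f K) (hf' : LocallyIntegrableOn (fderiv ℝ f) K μ) :
    ∃ U, IsOpen U ∧ C ⊆ U ∧ U ⊆ K ∧ ∃ g : E → F, Differentiable ℝ g ∧ HasCompactSupport g ∧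
      EqOn g f U ∧ LocallyIntegrable (fderiv ℝ g) μ := by
  obtain ⟨L, hL, hCL, hLK⟩ := exists_compact_between hC hK hCK
  obtain ⟨χ, hχ_one, hχ_zero, -⟩ := exists_contMDiffMap_one_nhds_of_subset_interior (n := 1)
    (modelWithCornersSelf ℝ E) hC.isClosed hCL
  obtain ⟨V, hV, hCV, hχV⟩ := eventually_nhdsSet_iff_exists.1 hχ_one
  have hχ : ContDiff ℝ 1 χ := contMDiff_iff_contDiff.1 χ.contMDiff
  have hdf (x : E) (hx : x ∈ L) : DifferentiableAt ℝ f x :=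
    hf.differentiableAt (hK.mem_nhds (hLK hx))
  have hdχ (x : E) : DifferentiableAt ℝ χ x := hχ.differentiable one_ne_zero x
  have hzero (x : E) (hx : x ∉ L) : (fun x ↦ χ x • f x) =ᶠ[𝓝 x] fun _ ↦ 0 := by
    filter_upwards [hL.isClosed.isOpen_compl.mem_nhds hx] with y hy
    rw [hχ_zero y hy, zero_smul]
  have hderiv : L.indicator (fun x ↦ χ x • fderiv ℝ f x + (fderiv ℝ χ x).smulRight (f x)) =
      fderiv ℝ fun x ↦ χ x • f x := by
    ext1 x
    by_cases hx : x ∈ L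
    · rw [indicator_of_mem hx, fderiv_fun_smul (hdχ x) (hdf x hx)]
    · rw [indicator_of_notMem hx, (hzero x hx).fderiv_eq, fderiv_const_apply]
  refine ⟨V ∩ K, hV.inter hK, subset_inter hCV hCK, inter_subset_right, fun x ↦ χ x • f x,
    fun x ↦ ?_, HasCompactSupport.intro hL fun x hx ↦ (hzero x hx).eq_of_nhds,
    fun x hx ↦ by simp only [hχV x hx.1, one_smul], ?_⟩
  · by_cases hx : x ∈ L
    · exact (hdχ x).smul (hdf x hx)
    · exact (differentiableAt_const 0).congr_of_eventuallyEq (hzero x hx)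
  · rw [← hderiv]
    have hleft : IntegrableOn (fun x ↦ χ x • fderiv ℝ f x) L μ :=
      (hf'.integrableOn_compact_subset hLK hL).continuousOn_smul hχ.continuous.continuousOn hL
    have hright : ContinuousOn (fun x ↦ (fderiv ℝ χ x).smulRight (f x)) L :=
      ((ContinuousLinearMap.smulRightL ℝ E F).continuous.comp
        (hχ.continuous_fderiv one_ne_zero)).continuousOn.clm_apply (hf.continuousOn.mono hLK)
    exact ((hleft.add (hright.integrableOn_compact hL)).integrable_indicator
      hL.measurableSet).locallyIntegrable

open ContinuousLinearMap in
open scoped Convolution in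
theorem exists_contDiff_dist_le_lintegral_enorm_fderiv_sq_le [CompleteSpace F] (hw : Continuous w)
    (hC : IsCompact C) (hwC : ∀ x ∈ C, w x ≠ 0) (hK : IsOpen K) (hCK : C ⊆ K) {f : E → F}
    (hf : DifferentiableOn ℝ f K) (hf' : LocallyIntegrableOn (fderiv ℝ f) K μ) {δ : ℝ} (hδ : 0 < δ)
    {c : ℝ≥0} (hc : 1 < c) :
    ∃ ψ : E → F, ContDiff ℝ 2 ψ ∧ HasCompactSupport ψ ∧ (∀ x ∈ C, dist (ψ x) (f x) ≤ δ) ∧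
      ∫⁻ x in C, ‖fderiv ℝ ψ x‖ₑ ^ 2 ∂(μ.withDensity fun x ↦ (w x : ℝ≥0∞)) ≤
        c * ∫⁻ x in K, ‖fderiv ℝ f x‖ₑ ^ 2 ∂(μ.withDensity fun x ↦ (w x : ℝ≥0∞)) := by
  obtain ⟨U, hU, hCU, hUK, g, hg, hgc, hgf, hg'⟩ := exists_differentiable_eqOn_nhds hC hK hCK hf hf'
  obtain ⟨r₁, hr₁, hunif⟩ := Metric.uniformContinuous_iff.1
    (hgc.uniformContinuous_of_continuous hg.continuous) δ hδ
  obtain ⟨r₂, hr₂, hshift⟩ := Metric.eventually_nhds_iff_ball.1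
    (eventually_forall_mem_and_le_mul_comp_sub hw hC hwC hU hCU hc)
  let b : ContDiffBump (0 : E) :=
    ⟨min r₁ r₂ / 2, min r₁ r₂, half_pos (lt_min hr₁ hr₂), half_lt_self (lt_min hr₁ hr₂)⟩
  refine ⟨b.normed μ ⋆[lsmul ℝ ℝ, μ] g, ?_, ?_, fun x hx ↦ ?_, ?_⟩
  · exact b.hasCompactSupport_normed.contDiff_convolution_left (n := 2) _ b.contDiff_normed
      hg.continuous.locallyIntegrable
  · exact b.hasCompactSupport_normed.convolution _ hgc
  · rw [← hgf (hCU hx)]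
    exact b.dist_normed_convolution_le hg.continuous.aestronglyMeasurable fun y hy ↦
      (hunif (lt_of_lt_of_le hy (min_le_left _ _))).le
  · have hgf' (x : E) (hx : x ∈ U) : fderiv ℝ g x = fderiv ℝ f x :=
      (hgf.eventuallyEq_of_mem (hU.mem_nhds hx)).fderiv_eq
    refine lintegral_enorm_fderiv_convolution_bump_sq_le b hg hg' fun t ht ↦ ?_
    calc _ ≤ c * ∫⁻ x in U, ‖fderiv ℝ g x‖ₑ ^ 2 ∂(μ.withDensity fun x ↦ (w x : ℝ≥0∞)) :=
          setLIntegral_comp_sub_le hw.measurable hC.measurableSet hU.measurableSet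
            (hshift t (mem_ball_zero_iff.2 (ht.trans_le (min_le_right _ _))))
            ((measurable_fderiv ℝ g).enorm.pow_const 2)
      _ = c * ∫⁻ x in U, ‖fderiv ℝ f x‖ₑ ^ 2 ∂(μ.withDensity fun x ↦ (w x : ℝ≥0∞)) := by
          congr 1
          exact setLIntegral_congr_fun hU.measurableSet fun x hx ↦ by simp only [hgf' x hx]
      _ ≤ _ := by gcongr

end Approximation

/-! ### The Poincaré inequality on a convex open set -/

section Poincare

variable {E : Type*} [NormedAddCommGroup E] [NormedSpace ℝ E] [FiniteDimensional ℝ E]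

theorem exists_finite_subset_convexHull {K C : Set E} (hK : IsOpen K) (hC : IsCompact C)
    (hCK : C ⊆ K) : ∃ t : Set E, t.Finite ∧ t ⊆ K ∧ C ⊆ convexHull ℝ t := by
  refine hC.induction_on (p := fun s ↦ ∃ t : Set E, t.Finite ∧ t ⊆ K ∧ s ⊆ convexHull ℝ t)
    ⟨∅, finite_empty, empty_subset _, empty_subset _⟩ ?_ ?_ fun x hx ↦ ?_
  · rintro s s' hs ⟨t, ht, htK, hst⟩
    exact ⟨t, ht, htK, hs.trans hst⟩
  · rintro s s' ⟨t, ht, htK, hst⟩ ⟨t', ht', htK', hst'⟩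
    exact ⟨t ∪ t', ht.union ht', union_subset htK htK', union_subset
      (hst.trans (convexHull_mono subset_union_left))
      (hst'.trans (convexHull_mono subset_union_right))⟩
  · obtain ⟨b, hxb, hbK⟩ := exists_mem_interior_convexHull_affineBasis (hK.mem_nhds (hCK hx))
    exact ⟨_, mem_nhdsWithin_of_mem_nhds (mem_interior_iff_mem_nhds.1 hxb), range b,
      finite_range b, (subset_convexHull ℝ _).trans hbK, Subset.rfl⟩

theorem exists_seq_isCompact_convex {K : Set E} (hK : IsOpen K) (hKc : Convex ℝ K) :
    ∃ C : ℕ → Set E, (∀ j, IsCompact (C j)) ∧ (∀ j, Convex ℝ (C j)) ∧ (∀ j, C j ⊆ K) ∧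
      ∀ x ∈ K, ∀ᶠ j in atTop, x ∈ C j := by
  obtain ⟨T, hTc, hTK, hT, hTm⟩ := hK.exists_iUnion_isClosed
  choose t ht htK hTt using fun j : ℕ ↦ exists_finite_subset_convexHull hK
    ((isCompact_closedBall (0 : E) j).inter_left (hTc j)) (inter_subset_left.trans (hTK j))
  refine ⟨fun j ↦ convexHull ℝ (t j), fun j ↦ (ht j).isCompact_convexHull ℝ,
    fun j ↦ convex_convexHull ℝ _, fun j ↦ convexHull_min (htK j) hKc, fun x hx ↦ ?_⟩
  obtain ⟨i, hi⟩ := mem_iUnion.1 (hT.symm ▸ hx)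
  filter_upwards [eventually_ge_atTop i, eventually_ge_atTop ⌈‖x‖⌉₊] with j hij hj
  exact hTt j ⟨hTm hij hi, mem_closedBall_zero_iff.2 (Nat.ceil_le.1 hj)⟩

theorem setLIntegral_le_of_tendsto {α : Type*} [MeasurableSpace α] {μ : Measure α} {S : Set α}
    {T : ℕ → Set α} (hS : MeasurableSet S) (hT : ∀ j, MeasurableSet (T j))
    (hST : ∀ x ∈ S, ∀ᶠ j in atTop, x ∈ T j) {u : α → ℝ≥0∞} {v : ℕ → α → ℝ≥0∞}
    (hv : ∀ j, Measurable (v j)) (hvu : ∀ x ∈ S, Tendsto (v · x) atTop (𝓝 (u x))) {A : ℕ → ℝ≥0∞}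
    (hA : ∀ j, ∫⁻ x in T j, v j x ∂μ ≤ A j) {a : ℝ≥0∞} (ha : Tendsto A atTop (𝓝 a)) :
    ∫⁻ x in S, u x ∂μ ≤ a :=
  calc ∫⁻ x in S, u x ∂μ
    _ = ∫⁻ x in S, liminf (fun j ↦ (T j).indicator (v j) x) atTop ∂μ := by
        refine setLIntegral_congr_fun hS fun x hx ↦ (Tendsto.liminf_eq ?_).symm
        exact (hvu x hx).congr' ((hST x hx).mono fun j hj ↦ (indicator_of_mem hj _).symm)
    _ ≤ ∫⁻ x, liminf (fun j ↦ (T j).indicator (v j) x) atTop ∂μ := setLIntegral_le_lintegral _ _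
    _ ≤ liminf (fun j ↦ ∫⁻ x, (T j).indicator (v j) x ∂μ) atTop :=
        lintegral_liminf_le fun j ↦ (hv j).indicator (hT j)
    _ ≤ liminf A atTop := by
        refine liminf_le_liminf (Eventually.of_forall fun j ↦ ?_)
        rw [lintegral_indicator (hT j)]
        exact hA j
    _ = a := ha.liminf_eq

variable [MeasurableSpace E] [BorelSpace E] {μ : Measure E}

theorem IsStronglyLogConcave.lintegral_prod_enorm_sub_sq_le {w : E → ℝ≥0∞}
    (hw : IsStronglyLogConcave w) (hwm : Measurable w) (hμ : PrekopaLeindler μ)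
    [IsFiniteMeasure (μ.withDensity w)] {φ : E → ℝ} (hφ : ContDiff ℝ 2 φ)
    (hφc : HasCompactSupport φ) :
    ∫⁻ p : E × E, ‖φ p.1 - φ p.2‖ₑ ^ 2 ∂(μ.withDensity w).prod (μ.withDensity w) ≤
      2 * μ.withDensity w univ * ∫⁻ x, ‖fderiv ℝ φ x‖ₑ ^ 2 ∂μ.withDensity w := by
  set ν := μ.withDensity w
  have hφ' : Continuous (fderiv ℝ φ) := hφ.continuous_fderiv two_ne_zero
  have henergy : Integrable (fun x ↦ ‖fderiv ℝ φ x‖ ^ 2) ν :=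
    ((hφ'.memLp_of_hasCompactSupport (hφc.fderiv ℝ)).integrable_norm_pow two_ne_zero)
  rw [lintegral_prod_enorm_sub_sq (hφ.continuous.memLp_of_hasCompactSupport hφc)]
  calc ENNReal.ofReal (2 * (ν.real univ * ∫ x, φ x ^ 2 ∂ν - (∫ x, φ x ∂ν) ^ 2))
    _ ≤ ENNReal.ofReal (2 * (ν.real univ * ∫ x, ‖fderiv ℝ φ x‖ ^ 2 ∂ν)) := by
        gcongr
        exact hw.variance_le_integral_norm_fderiv_sq hwm hμ hφ hφc
    _ = 2 * ν univ * ∫⁻ x, ‖fderiv ℝ φ x‖ₑ ^ 2 ∂ν := by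
        rw [ENNReal.ofReal_mul zero_le_two, ENNReal.ofReal_mul measureReal_nonneg,
          ofReal_measureReal, ofReal_integral_eq_lintegral_ofReal henergy
            (ae_of_all _ fun x ↦ by positivity), mul_assoc]
        simp only [ENNReal.ofReal_pow (norm_nonneg _), ofReal_norm, ENNReal.ofReal_ofNat]

theorem IsStronglyLogConcave.setLIntegral_prod_enorm_sub_sq_le {w : E → ℝ≥0∞}
    (hw : IsStronglyLogConcave w) (hwm : Measurable w) (hμ : PrekopaLeindler μ)
    [IsFiniteMeasure (μ.withDensity w)] {C : Set E} (hC : Convex ℝ C) (hCm : MeasurableSet C)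
    {φ : E → ℝ} (hφ : ContDiff ℝ 2 φ) (hφc : HasCompactSupport φ) :
    ∫⁻ p in C ×ˢ C, ‖φ p.1 - φ p.2‖ₑ ^ 2 ∂(μ.withDensity w).prod (μ.withDensity w) ≤
      2 * μ.withDensity w C * ∫⁻ x in C, ‖fderiv ℝ φ x‖ₑ ^ 2 ∂μ.withDensity w := by
  have hC' : (μ.withDensity w).restrict C = μ.withDensity (C.indicator w) := by
    rw [restrict_withDensity hCm, withDensity_indicator hCm]
  have : IsFiniteMeasure (μ.withDensity (C.indicator w)) := hC' ▸ inferInstance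
  rw [← Measure.prod_restrict, ← Measure.restrict_apply_univ C, hC']
  exact (hw.indicator hC).lintegral_prod_enorm_sub_sq_le (hwm.indicator hCm) hμ hφ hφc

section Exhaustion

variable [μ.IsAddHaarMeasure] {w : E → ℝ≥0} [IsFiniteMeasure (μ.withDensity fun x ↦ (w x : ℝ≥0∞))]

theorem exists_continuous_dist_le_setLIntegral_prod_enorm_sub_sq_le (hμ : PrekopaLeindler μ)
    (hw : Continuous w) (hw₀ : ∀ x, w x ≠ 0) (hwc : IsStronglyLogConcave fun x ↦ (w x : ℝ≥0∞))
    {K C : Set E} (hK : IsOpen K) (hC : IsCompact C) (hCc : Convex ℝ C) (hCK : C ⊆ K)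
    {f : E → ℝ} (hf : DifferentiableOn ℝ f K)
    (henergy : ∫⁻ x in K, ‖fderiv ℝ f x‖ₑ ^ 2 ∂(μ.withDensity fun x ↦ (w x : ℝ≥0∞)) ≠ ∞)
    {δ : ℝ} (hδ : 0 < δ) {c : ℝ≥0} (hc : 1 < c) :
    ∃ ψ : E → ℝ, Continuous ψ ∧ (∀ x ∈ C, dist (ψ x) (f x) ≤ δ) ∧
      ∫⁻ p in C ×ˢ C, ‖ψ p.1 - ψ p.2‖ₑ ^ 2 ∂(μ.withDensity fun x ↦ (w x : ℝ≥0∞)).prod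
          (μ.withDensity fun x ↦ (w x : ℝ≥0∞)) ≤
        2 * μ.withDensity (fun x ↦ (w x : ℝ≥0∞)) K *
          (c * ∫⁻ x in K, ‖fderiv ℝ f x‖ₑ ^ 2 ∂(μ.withDensity fun x ↦ (w x : ℝ≥0∞))) := by
  have hf' : MemLp (fderiv ℝ f) 2 ((μ.withDensity fun x ↦ (w x : ℝ≥0∞)).restrict K) := by
    refine ⟨(measurable_fderiv ℝ f).aestronglyMeasurable, ?_⟩
    rw [eLpNorm_lt_top_iff_lintegral_rpow_enorm_lt_top two_ne_zero ENNReal.ofNat_ne_top]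
    simpa only [ENNReal.toReal_ofNat, ENNReal.rpow_ofNat] using henergy.lt_top
  obtain ⟨ψ, hψ, hψc, hψf, hψ'⟩ := exists_contDiff_dist_le_lintegral_enorm_fderiv_sq_le hw hC
    (fun x _ ↦ hw₀ x) hK hCK hf
    (locallyIntegrableOn_of_memLp_withDensity hw hK.isLocallyClosed (fun x _ ↦ hw₀ x) hf') hδ hc
  refine ⟨ψ, hψ.continuous, hψf, ?_⟩
  refine (hwc.setLIntegral_prod_enorm_sub_sq_le hw.measurable.coe_nnreal_ennreal hμ hCc
    hC.measurableSet hψ hψc).trans ?_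
  gcongr

theorem setLIntegral_prod_enorm_sub_sq_le_of_isOpen (hμ : PrekopaLeindler μ)
    (hw : Continuous w) (hw₀ : ∀ x, w x ≠ 0) (hwc : IsStronglyLogConcave fun x ↦ (w x : ℝ≥0∞))
    {K : Set E} (hK : IsOpen K) (hKc : Convex ℝ K) {f : E → ℝ} (hf : DifferentiableOn ℝ f K)
    (henergy : ∫⁻ x in K, ‖fderiv ℝ f x‖ₑ ^ 2 ∂(μ.withDensity fun x ↦ (w x : ℝ≥0∞)) ≠ ∞) :
    ∫⁻ p in K ×ˢ K, ‖f p.1 - f p.2‖ₑ ^ 2 ∂(μ.withDensity fun x ↦ (w x : ℝ≥0∞)).prod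
        (μ.withDensity fun x ↦ (w x : ℝ≥0∞)) ≤
      2 * μ.withDensity (fun x ↦ (w x : ℝ≥0∞)) K *
        ∫⁻ x in K, ‖fderiv ℝ f x‖ₑ ^ 2 ∂(μ.withDensity fun x ↦ (w x : ℝ≥0∞)) := by
  obtain ⟨C, hC, hCc, hCK, hCx⟩ := exists_seq_isCompact_convex hK hKc
  let δ (j : ℕ) : ℝ := 1 / ((j : ℝ) + 1)
  let c (j : ℕ) : ℝ≥0 := 1 + 1 / ((j : ℝ≥0) + 1)
  have hδ : Tendsto δ atTop (𝓝 0) := tendsto_one_div_add_atTop_nhds_zero_nat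
  have hc : Tendsto (fun j ↦ (c j : ℝ≥0∞)) atTop (𝓝 1) := by
    have : Tendsto c atTop (𝓝 (1 + 0)) := tendsto_one_div_add_atTop_nhds_zero_nat.const_add 1
    simpa only [add_zero, ENNReal.coe_one] using ENNReal.tendsto_coe.2 this
  choose ψ hψ hψf hψ' using fun j ↦
    exists_continuous_dist_le_setLIntegral_prod_enorm_sub_sq_le hμ hw hw₀ hwc hK (hC j) (hCc j)
      (hCK j) hf henergy (δ := δ j) (c := c j) Nat.one_div_pos_of_nat (by simp [c])
  have hlim (x : E) (hx : x ∈ K) : Tendsto (ψ · x) atTop (𝓝 (f x)) :=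
    tendsto_iff_dist_tendsto_zero.2 <| squeeze_zero' (Eventually.of_forall fun _ ↦ dist_nonneg)
      ((hCx x hx).mono fun j hj ↦ hψf j x hj) hδ
  refine setLIntegral_le_of_tendsto (hK.measurableSet.prod hK.measurableSet)
    (fun j ↦ (hC j).measurableSet.prod (hC j).measurableSet)
    (fun p hp ↦ ((hCx _ hp.1).and (hCx _ hp.2)).mono fun j hj ↦ hj)
    (fun j ↦ ?_) (fun p hp ↦ ?_) hψ' ?_
  · have := (hψ j).measurable
    fun_prop
  · exact ((ENNReal.continuous_pow 2).tendsto _).comp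
      ((hlim _ hp.1).sub (hlim _ hp.2)).enorm
  · have hν : 2 * μ.withDensity (fun x ↦ (w x : ℝ≥0∞)) K ≠ ∞ :=
      ENNReal.mul_ne_top ENNReal.ofNat_ne_top (measure_ne_top _ _)
    simpa using ENNReal.Tendsto.const_mul (ENNReal.Tendsto.mul_const hc (.inr henergy)) (.inr hν)

theorem setIntegral_sq_le_setIntegral_norm_fderiv_sq (hμ : PrekopaLeindler μ)
    (hw : Continuous w) (hw₀ : ∀ x, w x ≠ 0) (hwc : IsStronglyLogConcave fun x ↦ (w x : ℝ≥0∞))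
    {K : Set E} (hK : IsOpen K) (hKc : Convex ℝ K) {f : E → ℝ} (hf : DifferentiableOn ℝ f K)
    (hf₂ : IntegrableOn (fun x ↦ f x ^ 2) K (μ.withDensity fun x ↦ (w x : ℝ≥0∞)))
    (hf' : IntegrableOn (fun x ↦ ‖fderiv ℝ f x‖ ^ 2) K (μ.withDensity fun x ↦ (w x : ℝ≥0∞)))
    (hf₀ : ∫ x in K, f x ∂(μ.withDensity fun x ↦ (w x : ℝ≥0∞)) = 0) :
    ∫ x in K, f x ^ 2 ∂(μ.withDensity fun x ↦ (w x : ℝ≥0∞)) ≤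
      ∫ x in K, ‖fderiv ℝ f x‖ ^ 2 ∂(μ.withDensity fun x ↦ (w x : ℝ≥0∞)) := by
  set ν := μ.withDensity fun x ↦ (w x : ℝ≥0∞)
  obtain hνK | hνK := eq_or_ne (ν K) 0
  · simp only [setIntegral_measure_zero _ hνK, le_refl]
  have hmemLp : MemLp f 2 (ν.restrict K) :=
    (memLp_two_iff_integrable_sq (hf.continuousOn.aestronglyMeasurable hK.measurableSet)).2 hf₂
  have henergy : ∫⁻ x in K, ‖fderiv ℝ f x‖ₑ ^ 2 ∂ν =
      ENNReal.ofReal (∫ x in K, ‖fderiv ℝ f x‖ ^ 2 ∂ν) := by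
    rw [ofReal_integral_eq_lintegral_ofReal hf' (ae_of_all _ fun x ↦ by positivity)]
    simp only [ENNReal.ofReal_pow (norm_nonneg _), ofReal_norm]
  have hmain := setLIntegral_prod_enorm_sub_sq_le_of_isOpen hμ hw hw₀ hwc hK hKc hf
    (henergy ▸ ENNReal.ofReal_ne_top)
  rw [← Measure.prod_restrict, lintegral_prod_enorm_sub_sq hmemLp, hf₀, henergy,
    measureReal_restrict_apply_univ, zero_pow two_ne_zero, sub_zero,
    ENNReal.ofReal_mul zero_le_two, ENNReal.ofReal_mul measureReal_nonneg, ofReal_measureReal,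
    ENNReal.ofReal_ofNat, ← mul_assoc] at hmain
  have hν : 2 * ν K ≠ ∞ := ENNReal.mul_ne_top ENNReal.ofNat_ne_top (measure_ne_top _ _)
  exact (ENNReal.ofReal_le_ofReal_iff (integral_nonneg fun x ↦ by positivity)).1
    ((ENNReal.mul_le_mul_iff_right (mul_ne_zero two_ne_zero hνK) hν).1 hmain)

end Exhaustion

end Poincare

/-! ### Uniformly distributed measures -/

/-- A measure for which balls of equal radius have equal mass, as in Christensen's uniqueness
theorem. -/
def IsUniformlyDistributed {X : Type*} [PseudoMetricSpace X] [MeasurableSpace X]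
    (μ : Measure X) : Prop :=
  ∀ x y r, μ (Metric.ball x r) = μ (Metric.ball y r)

namespace IsUniformlyDistributed

variable {X : Type*} [PseudoMetricSpace X] [MeasurableSpace X] {μ ν : Measure X}

theorem of_transitive [OpensMeasurableSpace X]
    (hμ : ∀ x y, ∃ e : X ≃ᵢ X, e x = y ∧ MeasurePreserving e μ μ) : IsUniformlyDistributed μ := by
  intro x y r
  obtain ⟨e, rfl, he⟩ := hμ x y
  rw [← he.measure_preimage (s := Metric.ball (e x) r) Metric.isOpen_ball.nullMeasurableSet,
    e.preimage_ball, e.symm_apply_apply]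

theorem measure_ball_ne_zero [SecondCountableTopology X] (hν : IsUniformlyDistributed ν)
    (hν₀ : ν ≠ 0) (x : X) {r : ℝ} (hr : 0 < r) : ν (Metric.ball x r) ≠ 0 := fun h ↦
  hν₀ <| Measure.measure_univ_eq_zero.1 <| measure_null_of_locally_null _ fun y _ ↦
    ⟨Metric.ball y r, mem_nhdsWithin_of_mem_nhds (Metric.ball_mem_nhds y hr), hν x y r ▸ h⟩

variable [SecondCountableTopology X] [OpensMeasurableSpace X]

theorem measurable_measure_inter_ball [SFinite ν] {U : Set X} (hU : MeasurableSet U) (r : ℝ) :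
    Measurable fun x ↦ ν (U ∩ Metric.ball x r) :=
  measurable_measure_prodMk_left (s := {p : X × X | p.2 ∈ U ∧ dist p.2 p.1 < r})
    ((measurable_snd hU).inter (measurableSet_lt (measurable_snd.dist measurable_fst)
      measurable_const))

theorem lintegral_measure_inter_ball [SFinite μ] [SFinite ν] (hμ : IsUniformlyDistributed μ)
    {U : Set X} (hU : MeasurableSet U) (x₀ : X) (r : ℝ) :
    ∫⁻ x, ν (U ∩ Metric.ball x r) ∂μ = μ (Metric.ball x₀ r) * ν U := by
  set s : Set (X × X) := {p | p.2 ∈ U ∧ dist p.2 p.1 < r}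
  have hs : MeasurableSet s := (measurable_snd hU).inter
    (measurableSet_lt (measurable_snd.dist measurable_fst) measurable_const)
  calc ∫⁻ x, ν (U ∩ Metric.ball x r) ∂μ
    _ = μ.prod ν s := (Measure.prod_apply hs).symm
    _ = ∫⁻ y, U.indicator (fun _ ↦ μ (Metric.ball x₀ r)) y ∂ν := by
        rw [Measure.prod_apply_symm hs]
        refine lintegral_congr fun y ↦ ?_
        by_cases hy : y ∈ U
        · rw [indicator_of_mem hy, hμ x₀ y]
          congr 1
          ext x
          simp [s, hy, dist_comm]
        · simp [s, hy]
    _ = μ (Metric.ball x₀ r) * ν U := by rw [lintegral_indicator hU, setLIntegral_const]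

variable [IsFiniteMeasure μ] [IsFiniteMeasure ν]

theorem measure_univ_mul_le (hμ : IsUniformlyDistributed μ) (hν : IsUniformlyDistributed ν)
    {U : Set X} (hU : IsOpen U) : ν univ * μ U ≤ μ univ * ν U := by
  obtain rfl | hν₀ := eq_or_ne ν 0
  · simp
  obtain hX | ⟨⟨x₀⟩⟩ := isEmpty_or_nonempty X
  · simp [univ_eq_empty_iff.2 hX]
  let r (k : ℕ) : ℝ := 1 / ((k : ℝ) + 1)
  let b (k : ℕ) : ℝ≥0∞ := ν (Metric.ball x₀ (r k))
  have hb (k : ℕ) : b k ≠ 0 := hν.measure_ball_ne_zero hν₀ x₀ Nat.one_div_pos_of_nat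
  have hb' (k : ℕ) : b k ≠ ∞ := measure_ne_top _ _
  have hratio (k : ℕ) : μ (Metric.ball x₀ (r k)) * ν univ = b k * μ univ := by
    rw [← hμ.lintegral_measure_inter_ball MeasurableSet.univ]
    simp only [univ_inter, hν _ x₀, lintegral_const, b]
  have hliminf (x : X) : U.indicator (fun _ ↦ ν univ) x ≤
      liminf (fun k ↦ (b k)⁻¹ * ν univ * ν (U ∩ Metric.ball x (r k))) atTop := by
    refine indicator_apply_le' (fun hx ↦ le_liminf_of_le (by isBoundedDefault) ?_) fun _ ↦ zero_le
    obtain ⟨ε, hε, hεU⟩ := Metric.isOpen_iff.1 hU x hx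
    filter_upwards [tendsto_one_div_add_atTop_nhds_zero_nat.eventually_lt_const hε] with k hk
    rw [inter_eq_self_of_subset_right ((Metric.ball_subset_ball hk.le).trans hεU), hν x x₀,
      mul_right_comm, ENNReal.inv_mul_cancel (hb k) (hb' k), one_mul]
  calc ν univ * μ U
    _ = ∫⁻ x, U.indicator (fun _ ↦ ν univ) x ∂μ := by
        rw [lintegral_indicator hU.measurableSet, setLIntegral_const]
    _ ≤ liminf (fun k ↦ ∫⁻ x, (b k)⁻¹ * ν univ * ν (U ∩ Metric.ball x (r k)) ∂μ) atTop :=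
        (lintegral_mono hliminf).trans <| lintegral_liminf_le fun k ↦
          (measurable_measure_inter_ball hU.measurableSet _).const_mul _
    _ = liminf (fun _ : ℕ ↦ μ univ * ν U) atTop := by
        congr 1 with k
        rw [lintegral_const_mul _ (measurable_measure_inter_ball hU.measurableSet _),
          hμ.lintegral_measure_inter_ball hU.measurableSet x₀, ← mul_assoc, mul_assoc _ (ν univ),
          mul_comm (ν univ), hratio, ← mul_assoc, ENNReal.inv_mul_cancel (hb k) (hb' k), one_mul]
    _ = μ univ * ν U := liminf_const _

theorem measure_univ_smul_eq [BorelSpace X] (hμ : IsUniformlyDistributed μ)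
    (hν : IsUniformlyDistributed ν) : ν univ • μ = μ univ • ν := by
  have : IsFiniteMeasure (μ univ • ν) := ν.smul_finite (measure_ne_top μ univ)
  have : IsFiniteMeasure (ν univ • μ) := μ.smul_finite (measure_ne_top ν univ)
  refine Measure.eq_of_le_of_measure_univ_eq (Measure.le_iff.2 fun s _ ↦ ?_) ?_
  · rw [s.measure_eq_iInf_isOpen (μ univ • ν)]
    exact le_iInf₂ fun U hsU ↦ le_iInf fun hU ↦
      (measure_mono hsU).trans (hμ.measure_univ_mul_le hν hU)
  · simp only [Measure.smul_apply, smul_eq_mul, mul_comm]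

end IsUniformlyDistributed

/-! ### Hausdorff measure on the sphere -/

theorem hausdorffMeasure_image_lt_top {F X : Type*} [NormedAddCommGroup F] [NormedSpace ℝ F]
    [FiniteDimensional ℝ F] [MeasurableSpace F] [BorelSpace F] [MetricSpace X] [MeasurableSpace X]
    [BorelSpace X] {g : F → X} (hg : LocallyLipschitz g) {s : Set F} (hs : IsCompact s) :
    μH[Module.finrank ℝ F] (g '' s) < ∞ := by
  obtain ⟨L, hL⟩ := hg.locallyLipschitzOn.exists_lipschitzOnWith_of_compact hs
  calc μH[Module.finrank ℝ F] (g '' s)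
    _ ≤ (L : ℝ≥0∞) ^ (Module.finrank ℝ F : ℝ) * μH[Module.finrank ℝ F] s :=
        hL.hausdorffMeasure_image_le (Nat.cast_nonneg _)
    _ < ∞ := ENNReal.mul_lt_top
        (ENNReal.rpow_lt_top_of_nonneg (Nat.cast_nonneg _) ENNReal.coe_ne_top)
        hs.measure_lt_top

section Sphere

variable {E : Type*} [NormedAddCommGroup E] [InnerProductSpace ℝ E]

theorem locallyLipschitz_stereographic_symm {v : E} (hv : ‖v‖ = 1) :
    LocallyLipschitz (stereographic hv).symm := by
  have hsmooth : ContDiff ℝ 1 fun y : (ℝ ∙ v)ᗮ ↦ stereoInvFunAux v y :=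
    contDiff_stereoInvFunAux.comp (ℝ ∙ v)ᗮ.subtypeL.contDiff
  exact fun y ↦ hsmooth.locallyLipschitz y

theorem exists_linearIsometryEquiv_apply_eq {x y : E} (h : ‖x‖ = ‖y‖) : ∃ e : E ≃ₗᵢ[ℝ] E, e x = y :=
  ⟨_, Submodule.reflection_sub h⟩

/-- The isometry of the unit sphere induced by a linear isometry of the ambient space. -/
def sphereIsometryEquiv (e : E ≃ₗᵢ[ℝ] E) :
    Metric.sphere (0 : E) 1 ≃ᵢ Metric.sphere (0 : E) 1 where
  toFun x := ⟨e x, by simp⟩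
  invFun x := ⟨e.symm x, by simp⟩
  left_inv x := by simp
  right_inv x := by simp
  isometry_toFun x y := e.isometry x y

theorem stereographic_symm_zero (v : Metric.sphere (0 : E) 1) :
    (stereographic (norm_eq_of_mem_sphere v)).symm 0 = -v := by
  ext1
  simp [stereographic, smul_smul]

theorem finrank_orthogonal_span_singleton_eq_sub_one [FiniteDimensional ℝ E] {v : E} (hv : v ≠ 0) :
    (Module.finrank ℝ (ℝ ∙ v)ᗮ : ℝ) = Module.finrank ℝ E - 1 := by
  rw [← (ℝ ∙ v).finrank_add_finrank_orthogonal, finrank_span_singleton hv, Nat.cast_add,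
    Nat.cast_one, add_sub_cancel_left]

variable [MeasurableSpace E] [BorelSpace E]

theorem isUniformlyDistributed_hausdorffMeasure_sphere (d : ℝ) :
    IsUniformlyDistributed (μH[d] : Measure (Metric.sphere (0 : E) 1)) :=
  .of_transitive fun x y ↦
    (exists_linearIsometryEquiv_apply_eq (by simp only [norm_eq_of_mem_sphere])).imp'
      sphereIsometryEquiv fun e he ↦ ⟨Subtype.ext he,
        (sphereIsometryEquiv e).measurePreserving_hausdorffMeasure d⟩

theorem measurePreserving_sphereIsometryEquiv_toSphere {μ : Measure E} {e : E ≃ₗᵢ[ℝ] E}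
    (he : MeasurePreserving e μ μ) :
    MeasurePreserving (sphereIsometryEquiv e) μ.toSphere μ.toSphere := by
  have hmeas := (sphereIsometryEquiv e).continuous.measurable
  refine ⟨hmeas, Measure.ext fun s hs ↦ ?_⟩
  have hcone : e ⁻¹' (Ioo (0 : ℝ) 1 • (Subtype.val '' s : Set E)) =
      Ioo (0 : ℝ) 1 • (Subtype.val '' (sphereIsometryEquiv e ⁻¹' s) : Set E) := by
    ext z
    constructor
    · rintro ⟨r, hr, _, ⟨x, hx, rfl⟩, hz : r • (x : E) = e z⟩
      refine ⟨r, hr, e.symm x, ⟨(sphereIsometryEquiv e).symm x, by simpa using hx, rfl⟩, ?_⟩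
      exact e.injective (by simpa using hz)
    · rintro ⟨r, hr, _, ⟨x, hx, rfl⟩, rfl⟩
      exact ⟨r, hr, e x, ⟨sphereIsometryEquiv e x, hx, rfl⟩, (map_smul e r _).symm⟩
  rw [Measure.map_apply hmeas hs, Measure.toSphere_apply' _ (hmeas hs),
    Measure.toSphere_apply' _ hs, ← hcone,
    he.measure_preimage_emb e.toHomeomorph.measurableEmbedding]

variable [FiniteDimensional ℝ E]

theorem isUniformlyDistributed_toSphere :
    IsUniformlyDistributed (volume : Measure E).toSphere :=
  .of_transitive fun x y ↦
    (exists_linearIsometryEquiv_apply_eq (by simp only [norm_eq_of_mem_sphere])).imp'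
      sphereIsometryEquiv fun e he ↦ ⟨Subtype.ext he,
        measurePreserving_sphereIsometryEquiv_toSphere e.measurePreserving⟩

instance isFiniteMeasure_hausdorffMeasure_sphere :
    IsFiniteMeasure (μH[(Module.finrank ℝ E : ℝ) - 1] : Measure (Metric.sphere (0 : E) 1)) := by
  suffices IsLocallyFiniteMeasure
      (μH[(Module.finrank ℝ E : ℝ) - 1] : Measure (Metric.sphere (0 : E) 1)) from
    ⟨isCompact_univ.measure_lt_top⟩
  refine ⟨fun x ↦ ?_⟩
  obtain ⟨v, rfl⟩ : ∃ v, x = -v := ⟨-x, (neg_neg x).symm⟩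
  have hv := norm_eq_of_mem_sphere v
  refine ⟨(stereographic hv).symm '' Metric.closedBall 0 1, ?_, ?_⟩
  · rw [← stereographic_symm_zero]
    exact (isOpenEmbedding_stereographic_symm hv).isOpenMap.image_mem_nhds
      (Metric.closedBall_mem_nhds 0 one_pos)
  · rw [← finrank_orthogonal_span_singleton_eq_sub_one (norm_ne_zero_iff.1 (hv ▸ one_ne_zero))]
    exact hausdorffMeasure_image_lt_top (locallyLipschitz_stereographic_symm hv)
      (isCompact_closedBall _ _)

theorem exists_hausdorffMeasure_restrict_sphere_eq_smul [Nontrivial E] :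
    ∃ c : ℝ≥0∞, c ≠ ∞ ∧
      (μH[(Module.finrank ℝ E : ℝ) - 1] : Measure E).restrict (Metric.sphere 0 1) =
        c • (volume : Measure E).toSphere.map Subtype.val := by
  set ν := (volume : Measure E).toSphere
  set η : Measure (Metric.sphere (0 : E) 1) := μH[(Module.finrank ℝ E : ℝ) - 1]
  have hν₀ : ν univ ≠ 0 := Measure.measure_univ_ne_zero.2 (Measure.toSphere_ne_zero _)
  have hd : 0 ≤ (Module.finrank ℝ E : ℝ) - 1 :=
    sub_nonneg.2 (Nat.one_le_cast.2 Module.finrank_pos)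
  have hη : η = (η univ / ν univ) • ν := by
    rw [ENNReal.div_eq_inv_mul, mul_smul, ← (isUniformlyDistributed_hausdorffMeasure_sphere
      _).measure_univ_smul_eq isUniformlyDistributed_toSphere, smul_smul,
      ENNReal.inv_mul_cancel hν₀ (measure_ne_top _ _), one_smul]
  refine ⟨η univ / ν univ, ENNReal.div_ne_top (measure_ne_top _ _) hν₀, ?_⟩
  rw [← Measure.map_smul, ← hη, isometry_subtype_coe.map_hausdorffMeasure (.inl hd),
    Subtype.range_coe]

end Sphere

/-! ### Polar coordinates for the Gaussian measure -/

/-- The moment `∫₀^∞ r ^ j * exp (-r² / 2) dr` of the Gaussian weight on the half-line: the radial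
factor of a Gaussian integral in polar coordinates. -/
def gaussianMoment (j : ℕ) : ℝ := ∫ r in Ioi (0 : ℝ), r ^ j * Real.exp (-(r ^ 2 / 2))

theorem integrableOn_pow_mul_exp_neg_sq_div_two (j : ℕ) :
    IntegrableOn (fun r : ℝ ↦ r ^ j * Real.exp (-(r ^ 2 / 2))) (Ioi 0) := by
  have hj : (-1 : ℝ) < j := neg_one_lt_zero.trans_le j.cast_nonneg
  refine (integrableOn_rpow_mul_exp_neg_mul_sq one_half_pos hj).congr_fun (fun r _ ↦ ?_)
    measurableSet_Ioi
  simp only [Real.rpow_natCast]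
  ring_nf

theorem gaussianMoment_eq (j : ℕ) : gaussianMoment j =
    (1 / 2 : ℝ) ^ (-((j : ℝ) + 1) / 2) * (1 / 2) * Real.Gamma (((j : ℝ) + 1) / 2) := by
  rw [gaussianMoment, ← integral_rpow_mul_exp_neg_mul_rpow two_pos
    (neg_one_lt_zero.trans_le j.cast_nonneg) one_half_pos]
  refine setIntegral_congr_fun measurableSet_Ioi fun r _ ↦ ?_
  simp only [Real.rpow_natCast, Real.rpow_two]
  ring_nf

theorem gaussianMoment_pos (j : ℕ) : 0 < gaussianMoment j := by
  rw [gaussianMoment_eq]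
  have : 0 < Real.Gamma (((j : ℝ) + 1) / 2) := Real.Gamma_pos_of_pos (by positivity)
  positivity

theorem gaussianMoment_add_two (j : ℕ) :
    gaussianMoment (j + 2) = ((j : ℝ) + 1) * gaussianMoment j := by
  have h₁ : (((j + 2 : ℕ) : ℝ) + 1) / 2 = ((j : ℝ) + 1) / 2 + 1 := by push_cast; ring
  have h₂ : -(((j + 2 : ℕ) : ℝ) + 1) / 2 = -((j : ℝ) + 1) / 2 + (-1) := by push_cast; ring
  rw [gaussianMoment_eq, gaussianMoment_eq, h₁, h₂, Real.Gamma_add_one (by positivity),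
    Real.rpow_add one_half_pos, Real.rpow_neg_one]
  ring

theorem volumeIoiPow_density_smul_eq (m k : ℕ) (r : Ioi (0 : ℝ)) :
    (ENNReal.ofReal (r.1 ^ m)).toReal • (r.1 ^ k * Real.exp (-(r.1 ^ 2 / 2))) =
      r.1 ^ (m + k) * Real.exp (-(r.1 ^ 2 / 2)) := by
  rw [ENNReal.toReal_ofReal (pow_nonneg r.2.out.le m), smul_eq_mul, pow_add, mul_assoc]

theorem integrable_volumeIoiPow_pow_mul_exp (m k : ℕ) :
    Integrable (fun r : Ioi (0 : ℝ) ↦ r.1 ^ k * Real.exp (-(r.1 ^ 2 / 2)))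
      (Measure.volumeIoiPow m) := by
  rw [Measure.volumeIoiPow, integrable_withDensity_iff_integrable_smul' (by fun_prop)
    (ae_of_all _ fun _ ↦ ENNReal.ofReal_lt_top)]
  simp only [volumeIoiPow_density_smul_eq]
  exact (integrableOn_iff_comap_subtypeVal measurableSet_Ioi).1
    (integrableOn_pow_mul_exp_neg_sq_div_two (m + k))

theorem integral_volumeIoiPow_pow_mul_exp (m k : ℕ) :
    ∫ r : Ioi (0 : ℝ), r.1 ^ k * Real.exp (-(r.1 ^ 2 / 2)) ∂Measure.volumeIoiPow m =
      gaussianMoment (m + k) := by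
  rw [Measure.volumeIoiPow, integral_withDensity_eq_integral_toReal_smul (by fun_prop)
    (ae_of_all _ fun _ ↦ ENNReal.ofReal_lt_top)]
  simp only [volumeIoiPow_density_smul_eq]
  exact integral_subtype_comap measurableSet_Ioi
    fun r : ℝ ↦ r ^ (m + k) * Real.exp (-(r ^ 2 / 2))

theorem indicator_preimage_normalize {E : Type*} [NormedAddCommGroup E] [NormedSpace ℝ E]
    (h : E → ℝ) (ω : Set E) (k : ℕ) :
    (NormedSpace.normalize ⁻¹' ω).indicator (fun x ↦ ‖x‖ ^ k * h (NormedSpace.normalize x)) =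
      fun x ↦ ‖x‖ ^ k * ω.indicator h (NormedSpace.normalize x) := by
  funext x
  exact indicator_mul_right _ _ _

theorem measurable_normalize {E : Type*} [NormedAddCommGroup E] [NormedSpace ℝ E]
    [MeasurableSpace E] [BorelSpace E] [SecondCountableTopology E] :
    Measurable (NormedSpace.normalize : E → E) := by
  unfold NormedSpace.normalize
  fun_prop

section Gaussian

variable {E : Type*} [NormedAddCommGroup E]

/-- The density `exp (-‖x‖² / 2)` of the unnormalized standard Gaussian measure, with values in
`ℝ≥0` so that it can be used both as a continuous weight and as a density. -/
def gaussianWeight (x : E) : ℝ≥0 := ⟨Real.exp (-(‖x‖ ^ 2 / 2)), (Real.exp_pos _).le⟩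

theorem coe_gaussianWeight (x : E) : (gaussianWeight x : ℝ) = Real.exp (-(‖x‖ ^ 2 / 2)) := rfl

theorem ennreal_coe_gaussianWeight (x : E) :
    (gaussianWeight x : ℝ≥0∞) = ENNReal.ofReal (Real.exp (-(‖x‖ ^ 2 / 2))) := by
  rw [← coe_gaussianWeight, ENNReal.ofReal_coe_nnreal]

theorem gaussianWeight_ne_zero (x : E) : gaussianWeight x ≠ 0 :=
  NNReal.coe_ne_zero.1 (Real.exp_ne_zero _)

theorem continuous_gaussianWeight : Continuous (gaussianWeight : E → ℝ≥0) :=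
  Continuous.subtype_mk (by fun_prop) _

variable [InnerProductSpace ℝ E]

theorem isStronglyLogConcave_gaussianWeight :
    IsStronglyLogConcave fun x : E ↦ (gaussianWeight x : ℝ≥0∞) := by
  intro z d
  have := parallelogram_law_with_norm ℝ z d
  simp only [ennreal_coe_gaussianWeight]
  rw [← ENNReal.ofReal_mul (Real.exp_pos _).le, ← ENNReal.ofReal_pow (Real.exp_pos _).le,
    ← ENNReal.ofReal_mul (by positivity), ← Real.exp_add, ← Real.exp_nat_mul, ← Real.exp_add]
  refine ENNReal.ofReal_le_ofReal (Real.exp_le_exp.2 (le_of_eq ?_))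
  push_cast
  linarith

theorem gaussianWeight_smul_eq_homeomorphUnitSphereProd (h : E → ℝ) (k : ℕ)
    (x : ({0}ᶜ : Set E)) :
    gaussianWeight (x : E) • (‖(x : E)‖ ^ k * h (NormedSpace.normalize x)) =
      h (homeomorphUnitSphereProd E x).1 * ((homeomorphUnitSphereProd E x).2.1 ^ k *
        Real.exp (-((homeomorphUnitSphereProd E x).2.1 ^ 2 / 2))) := by
  rw [NNReal.smul_def, coe_gaussianWeight, smul_eq_mul, homeomorphUnitSphereProd_apply_fst_coe,
    homeomorphUnitSphereProd_apply_snd_coe, NormedSpace.normalize]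
  ring

variable [FiniteDimensional ℝ E] [MeasurableSpace E] [BorelSpace E]

theorem integrable_gaussianWeight : Integrable fun x : E ↦ (gaussianWeight x : ℝ) := by
  refine (GaussianFourier.integrable_cexp_neg_mul_sq_norm_add (V := E) (b := (1 / 2 : ℂ))
    (by norm_num) 0 0).norm.congr (ae_of_all _ fun x ↦ ?_)
  simp [coe_gaussianWeight, Complex.norm_exp, ← Complex.ofReal_pow, div_eq_inv_mul]

/-- The unnormalized standard Gaussian measure `exp (-‖x‖² / 2) dx`. -/
def gaussian (E : Type*) [NormedAddCommGroup E] [InnerProductSpace ℝ E] [FiniteDimensional ℝ E]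
    [MeasurableSpace E] [BorelSpace E] : Measure E :=
  volume.withDensity fun x ↦ (gaussianWeight x : ℝ≥0∞)

instance isFiniteMeasure_gaussian : IsFiniteMeasure (gaussian E) := by
  have := isFiniteMeasure_withDensity_ofReal (integrable_gaussianWeight (E := E)).2
  simpa only [gaussian, ENNReal.ofReal_coe_nnreal] using this

variable [Nontrivial E] {h : E → ℝ}

theorem integrable_gaussian_norm_pow_mul_normalize
    (hh : Integrable h ((volume : Measure E).toSphere.map Subtype.val)) (k : ℕ) :
    Integrable (fun x ↦ ‖x‖ ^ k * h (NormedSpace.normalize x)) (gaussian E) := by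
  rw [gaussian, integrable_withDensity_iff_integrable_smul continuous_gaussianWeight.measurable,
    ← restrict_compl_singleton (μ := volume) 0, ← IntegrableOn,
    integrableOn_iff_comap_subtypeVal (measurableSet_singleton _).compl]
  refine (((volume : Measure E).measurePreserving_homeomorphUnitSphereProd.integrable_comp_emb
    (Homeomorph.measurableEmbedding _)).2 (((MeasurableEmbedding.subtype_coe
      Metric.isClosed_sphere.measurableSet).integrable_map_iff.1
      hh).mul_prod (integrable_volumeIoiPow_pow_mul_exp _ k))).congr (ae_of_all _ fun x ↦ ?_)
  exact (gaussianWeight_smul_eq_homeomorphUnitSphereProd h k x).symm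

theorem integral_gaussian_norm_pow_mul_normalize (h : E → ℝ) (k : ℕ) :
    ∫ x, ‖x‖ ^ k * h (NormedSpace.normalize x) ∂gaussian E =
      gaussianMoment (Module.finrank ℝ E - 1 + k) *
        ∫ θ, h θ ∂(volume : Measure E).toSphere.map Subtype.val := by
  have hcompl (g : E → ℝ) :
      ∫ x, g x = ∫ x : ({0}ᶜ : Set E), g x ∂(volume : Measure E).comap Subtype.val := by
    rw [integral_subtype_comap (measurableSet_singleton _).compl, restrict_compl_singleton]
  rw [gaussian, integral_withDensity_eq_integral_smul continuous_gaussianWeight.measurable, hcompl]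
  simp only [gaussianWeight_smul_eq_homeomorphUnitSphereProd]
  rw [(volume : Measure E).measurePreserving_homeomorphUnitSphereProd.integral_comp
    (Homeomorph.measurableEmbedding _) fun p ↦ h p.1 * (p.2.1 ^ k * Real.exp (-(p.2.1 ^ 2 / 2))),
    integral_prod_mul (fun θ : Metric.sphere (0 : E) 1 ↦ h θ) fun r : Ioi (0 : ℝ) ↦
      r.1 ^ k * Real.exp (-(r.1 ^ 2 / 2)), integral_volumeIoiPow_pow_mul_exp, mul_comm,
    (MeasurableEmbedding.subtype_coe Metric.isClosed_sphere.measurableSet).integral_map]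

theorem integrableOn_gaussian_norm_pow_mul_normalize {ω : Set E} (hω : MeasurableSet ω)
    (hh : IntegrableOn h ω ((volume : Measure E).toSphere.map Subtype.val)) (k : ℕ) :
    IntegrableOn (fun x ↦ ‖x‖ ^ k * h (NormedSpace.normalize x)) (NormedSpace.normalize ⁻¹' ω)
      (gaussian E) := by
  rw [← integrable_indicator_iff (measurable_normalize hω), indicator_preimage_normalize]
  exact integrable_gaussian_norm_pow_mul_normalize ((integrable_indicator_iff hω).2 hh) k

theorem setIntegral_gaussian_norm_pow_mul_normalize {ω : Set E} (hω : MeasurableSet ω)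
    (h : E → ℝ) (k : ℕ) :
    ∫ x in NormedSpace.normalize ⁻¹' ω, ‖x‖ ^ k * h (NormedSpace.normalize x) ∂gaussian E =
      gaussianMoment (Module.finrank ℝ E - 1 + k) *
        ∫ θ in ω, h θ ∂(volume : Measure E).toSphere.map Subtype.val := by
  rw [← integral_indicator (measurable_normalize hω), ← integral_indicator hω,
    indicator_preimage_normalize, integral_gaussian_norm_pow_mul_normalize]

end Gaussian

/-! ### Functions homogeneous of degree zero -/

section Homogeneous

section NormedSpace

variable {E : Type*} [NormedAddCommGroup E] [NormedSpace ℝ E] {F : E → ℝ}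

theorem fderiv_eq_smul_fderiv_smul_of_homogeneous (hF : ∀ c : ℝ, 0 < c → ∀ x, F (c • x) = F x)
    {c : ℝ} (hc : 0 < c) (x : E) : fderiv ℝ F x = c • fderiv ℝ F (c • x) := by
  rw [← fderiv_comp_smul, funext (hF c hc)]

theorem fderiv_apply_self_of_homogeneous (hF : ∀ c : ℝ, 0 < c → ∀ x, F (c • x) = F x) (x : E) :
    fderiv ℝ F x x = 0 := by
  by_cases hd : DifferentiableAt ℝ F x
  · have hconst : (fun t : ℝ ↦ F (x + t • x)) =ᶠ[𝓝 0] fun _ ↦ F x := by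
      filter_upwards [lt_mem_nhds (neg_one_lt_zero (R := ℝ))] with t ht
      simpa only [add_smul, one_smul] using hF (1 + t) (by linarith) x
    exact (hd.hasFDerivAt.hasLineDerivAt x).unique
      ((hasDerivAt_const 0 (F x)).congr_of_eventuallyEq hconst)
  · rw [fderiv_zero_of_not_differentiableAt hd, zero_apply]

end NormedSpace

variable {E : Type*} [NormedAddCommGroup E] [InnerProductSpace ℝ E] [CompleteSpace E]

theorem hasGradientAt_norm {x : E} (hx : x ≠ 0) :
    HasGradientAt (fun y : E ↦ ‖y‖) (NormedSpace.normalize x) x := by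
  have h := (hasStrictFDerivAt_norm_sq x).hasFDerivAt.sqrt (by positivity)
  simp only [Real.sqrt_sq (norm_nonneg _)] at h
  refine h.congr_fderiv (ContinuousLinearMap.ext fun v ↦ ?_)
  simp only [one_div, mul_inv_rev, smul_apply, coe_innerSL_apply,
    nsmul_eq_mul, Nat.cast_ofNat, smul_eq_mul, NormedSpace.normalize, map_smul,
    InnerProductSpace.toDual_apply_apply]
  ring

variable {F : E → ℝ}

theorem hasGradientAt_norm_mul_of_homogeneous (hF : ∀ c : ℝ, 0 < c → ∀ x, F (c • x) = F x) {x : E}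
    (hx : x ≠ 0) (hd : DifferentiableAt ℝ F x) :
    HasGradientAt (fun y ↦ ‖y‖ * F y)
      (F x • NormedSpace.normalize x + gradient F (NormedSpace.normalize x)) x := by
  have hx' : 0 < ‖x‖ := norm_pos_iff.2 hx
  have hgrad : gradient F (NormedSpace.normalize x) = ‖x‖ • gradient F x := by
    rw [gradient, gradient, fderiv_eq_smul_fderiv_smul_of_homogeneous hF (inv_pos.2 hx') x,
      map_smul, smul_inv_smul₀ hx'.ne']
    rfl
  rw [hgrad, add_comm, hasGradientAt_iff_hasFDerivAt, map_add, map_smul, map_smul]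
  exact (hasGradientAt_norm hx).hasFDerivAt.mul hd.hasGradientAt.hasFDerivAt

theorem norm_fderiv_norm_mul_sq_of_homogeneous (hF : ∀ c : ℝ, 0 < c → ∀ x, F (c • x) = F x) {x : E}
    (hx : x ≠ 0) (hd : DifferentiableAt ℝ F x) :
    ‖fderiv ℝ (fun y ↦ ‖y‖ * F y) x‖ ^ 2 =
      F x ^ 2 + ‖gradient F (NormedSpace.normalize x)‖ ^ 2 := by
  rw [(hasGradientAt_norm_mul_of_homogeneous hF hx hd).hasFDerivAt.fderiv,
    LinearIsometryEquiv.norm_map, norm_add_sq_real, real_inner_smul_left, real_inner_comm,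
    inner_gradient_left, fderiv_apply_self_of_homogeneous hF, norm_smul,
    NormedSpace.norm_normalize hx, mul_one, mul_zero, mul_zero, add_zero, Real.norm_eq_abs, sq_abs]

end Homogeneous

/-! ### The eigenvalue bound -/

section Cone

theorem preimage_normalize_inter_sphere {E : Type*} [NormedAddCommGroup E] [NormedSpace ℝ E]
    {ω : Set E} (hω : ω ⊆ Metric.sphere 0 1) :
    NormedSpace.normalize ⁻¹' ω ∩ Metric.sphere 0 1 = ω := by
  have hfix {x : E} (hx : x ∈ Metric.sphere 0 1) : NormedSpace.normalize x = x :=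
    NormedSpace.normalize_eq_self_of_norm_eq_one (mem_sphere_zero_iff_norm.1 hx)
  ext x
  refine ⟨fun ⟨hx, hx₁⟩ ↦ ?_, fun hx ↦ ⟨?_, hω hx⟩⟩
  · rwa [mem_preimage, hfix hx₁] at hx
  · rwa [mem_preimage, hfix (hω hx)]

theorem ne_zero_of_mem_preimage_normalize {E : Type*} [NormedAddCommGroup E] [NormedSpace ℝ E]
    {ω : Set E} (hω : ω ⊆ Metric.sphere 0 1) {x : E} (hx : x ∈ NormedSpace.normalize ⁻¹' ω) :
    x ≠ 0 := by
  rintro rfl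
  simpa using hω hx

variable {E : Type*} [NormedAddCommGroup E] [InnerProductSpace ℝ E] [FiniteDimensional ℝ E]
  [MeasurableSpace E] [BorelSpace E] {ω : Set E} {Φ : E → ℝ}

theorem setIntegral_gaussian_sq_le_setIntegral_norm_fderiv_sq {K : Set E} (hK : IsOpen K)
    (hKc : Convex ℝ K) {f : E → ℝ} (hf : DifferentiableOn ℝ f K)
    (hf₂ : IntegrableOn (fun x ↦ f x ^ 2) K (gaussian E))
    (hf' : IntegrableOn (fun x ↦ ‖fderiv ℝ f x‖ ^ 2) K (gaussian E))
    (hf₀ : ∫ x in K, f x ∂gaussian E = 0) :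
    ∫ x in K, f x ^ 2 ∂gaussian E ≤ ∫ x in K, ‖fderiv ℝ f x‖ ^ 2 ∂gaussian E :=
  have : IsFiniteMeasure (volume.withDensity fun x : E ↦ (gaussianWeight x : ℝ≥0∞)) :=
    isFiniteMeasure_gaussian
  setIntegral_sq_le_setIntegral_norm_fderiv_sq .volume_innerProductSpace continuous_gaussianWeight
    gaussianWeight_ne_zero isStronglyLogConcave_gaussianWeight hK hKc hf hf₂ hf' hf₀

theorem setIntegral_toSphere_sq_le [Nontrivial E] (hω : ω ⊆ Metric.sphere 0 1)
    (hK : IsOpen (NormedSpace.normalize ⁻¹' ω)) (hKc : Convex ℝ (NormedSpace.normalize ⁻¹' ω))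
    (hΦ : DifferentiableOn ℝ (fun x ↦ Φ (NormedSpace.normalize x)) (NormedSpace.normalize ⁻¹' ω))
    (hΦ₂ : IntegrableOn (fun θ ↦ Φ θ ^ 2) ω ((volume : Measure E).toSphere.map Subtype.val))
    (hΦ' : IntegrableOn (fun θ ↦ ‖gradient (fun x ↦ Φ (NormedSpace.normalize x)) θ‖ ^ 2) ω
      ((volume : Measure E).toSphere.map Subtype.val))
    (hΦ₀ : ∫ θ in ω, Φ θ ∂(volume : Measure E).toSphere.map Subtype.val = 0) :
    (Module.finrank ℝ E - 1 : ℝ) *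
        ∫ θ in ω, Φ θ ^ 2 ∂(volume : Measure E).toSphere.map Subtype.val ≤
      ∫ θ in ω, ‖gradient (fun x ↦ Φ (NormedSpace.normalize x)) θ‖ ^ 2
        ∂(volume : Measure E).toSphere.map Subtype.val := by
  have hωm : MeasurableSet ω := by
    rw [← preimage_normalize_inter_sphere hω]
    exact hK.measurableSet.inter Metric.isClosed_sphere.measurableSet
  have hF (c : ℝ) (hc : 0 < c) (x : E) :
      Φ (NormedSpace.normalize (c • x)) = Φ (NormedSpace.normalize x) := by
    rw [NormedSpace.normalize_smul_of_pos hc]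
  have hd (x : E) (hx : x ∈ NormedSpace.normalize ⁻¹' ω) := hΦ.differentiableAt (hK.mem_nhds hx)
  have hf' (x : E) (hx : x ∈ NormedSpace.normalize ⁻¹' ω) :=
    norm_fderiv_norm_mul_sq_of_homogeneous hF (ne_zero_of_mem_preimage_normalize hω hx) (hd x hx)
  have hint := integrableOn_gaussian_norm_pow_mul_normalize hωm (hΦ₂.add hΦ') 0
  have hint₂ := integrableOn_gaussian_norm_pow_mul_normalize hωm hΦ₂ 2
  have henergy := setIntegral_gaussian_norm_pow_mul_normalize hωm
    (fun θ ↦ Φ θ ^ 2 + ‖gradient (fun x ↦ Φ (NormedSpace.normalize x)) θ‖ ^ 2) 0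
  have hsq := setIntegral_gaussian_norm_pow_mul_normalize hωm (fun θ ↦ Φ θ ^ 2) 2
  have hmean := setIntegral_gaussian_norm_pow_mul_normalize hωm Φ 1
  simp only [pow_zero, one_mul, Pi.add_apply, ← mul_pow] at hint henergy hint₂ hsq
  rw [← setIntegral_congr_fun hK.measurableSet hf', integral_add hΦ₂ hΦ', add_zero] at henergy
  rw [hΦ₀, mul_zero] at hmean
  simp only [pow_one] at hmean
  have hpoincare := setIntegral_gaussian_sq_le_setIntegral_norm_fderiv_sq hK hKc
    (fun x hx ↦ (hasGradientAt_norm_mul_of_homogeneous hF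
      (ne_zero_of_mem_preimage_normalize hω hx)
      (hd x hx)).differentiableAt.differentiableWithinAt)
    hint₂ ((integrableOn_congr_fun hf' hK.measurableSet).2 hint) hmean
  have hn : ((Module.finrank ℝ E - 1 : ℕ) : ℝ) + 1 = Module.finrank ℝ E := by
    exact_mod_cast Nat.sub_add_cancel Module.finrank_pos
  rw [hsq, henergy, gaussianMoment_add_two, hn, mul_right_comm, mul_comm] at hpoincare
  linarith [le_of_mul_le_mul_left hpoincare (gaussianMoment_pos _)]

end Cone

theorem hemisphere_eigenvalue_bound_general {E : Type*} [NormedAddCommGroup E]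
    [InnerProductSpace ℝ E] [FiniteDimensional ℝ E] [MeasurableSpace E] [BorelSpace E]
    {ω : Set E} (hω : ω ⊆ Metric.sphere 0 1) (hK : IsOpen {x : E | x ≠ 0 ∧ ‖x‖⁻¹ • x ∈ ω})
    (hKc : Convex ℝ {x : E | x ≠ 0 ∧ ‖x‖⁻¹ • x ∈ ω}) {Φ : E → ℝ}
    (hΦ : DifferentiableOn ℝ (fun x ↦ Φ (‖x‖⁻¹ • x)) {x | x ≠ 0 ∧ ‖x‖⁻¹ • x ∈ ω})
    (hΦ₂ : Integrable (fun θ ↦ Φ θ ^ 2) (μH[(Module.finrank ℝ E : ℝ) - 1].restrict ω))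
    (hΦ' : Integrable (fun θ ↦ ‖gradient (fun x ↦ Φ (‖x‖⁻¹ • x)) θ‖ ^ 2)
      (μH[(Module.finrank ℝ E : ℝ) - 1].restrict ω))
    (hΦ₀ : ∫ θ, Φ θ ∂μH[(Module.finrank ℝ E : ℝ) - 1].restrict ω = 0) :
    ((Module.finrank ℝ E : ℝ) - 1) *
        ∫ θ, Φ θ ^ 2 ∂μH[(Module.finrank ℝ E : ℝ) - 1].restrict ω ≤
      ∫ θ, ‖gradient (fun x ↦ Φ (‖x‖⁻¹ • x)) θ‖ ^ 2
        ∂μH[(Module.finrank ℝ E : ℝ) - 1].restrict ω := by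
  obtain hE | hE := subsingleton_or_nontrivial E
  · rw [Metric.sphere_eq_empty_of_subsingleton one_ne_zero, subset_empty_iff] at hω
    simp [hω]
  have hKω : {x : E | x ≠ 0 ∧ ‖x‖⁻¹ • x ∈ ω} = NormedSpace.normalize ⁻¹' ω :=
    ext fun x ↦ and_iff_right_of_imp (ne_zero_of_mem_preimage_normalize hω)
  rw [hKω] at hK hKc hΦ
  obtain ⟨c, hc, hμ⟩ := exists_hausdorffMeasure_restrict_sphere_eq_smul (E := E)
  rw [← Measure.restrict_restrict_of_subset hω, hμ, Measure.restrict_smul] at hΦ₂ hΦ' hΦ₀ ⊢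
  obtain rfl | hc₀ := eq_or_ne c 0
  · simp
  rw [integrable_smul_measure hc₀ hc] at hΦ₂ hΦ'
  rw [integral_smul_measure, smul_eq_mul, mul_eq_zero,
    or_iff_right (ENNReal.toReal_pos hc₀ hc).ne'] at hΦ₀
  rw [integral_smul_measure, integral_smul_measure, mul_smul_comm]
  exact smul_le_smul_of_nonneg_left (setIntegral_toSphere_sq_le hω hK hKc hΦ hΦ₂ hΦ' hΦ₀)
    ENNReal.toReal_nonneg

/-- Escobar-type estimate: for a convex open subdomain `ω` of the upper unit
hemisphere `S₊^{n−1}` (convexity and openness being expressed through the cone `K`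
over `ω`), the first nonzero Neumann eigenvalue of the Laplace–Beltrami operator on
`ω` is at least `n − 1`; equivalently, the Rayleigh quotient of every mean-zero
trial function `Φ ∈ W^{1,2}(ω)` is at least `n − 1`.  The spherical gradient of `Φ`
is realized as the Euclidean gradient of the `0`-homogeneous extension
`x ↦ Φ(x/|x|)`, and integration over `ω` uses `(n−1)`-dimensional Hausdorff
measure. -/
theorem hemisphere_eigenvalue_bound (n : ℕ) (hn : 2 ≤ n)
    (ω : Set (EuclideanSpace ℝ (Fin n)))
    (hω : ω ⊆ {x : EuclideanSpace ℝ (Fin n) | ‖x‖ = 1 ∧ 0 < x ⟨n - 1, by omega⟩})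
    (hne : ω.Nonempty)
    (K : Set (EuclideanSpace ℝ (Fin n)))
    (hK : K = {x | x ≠ 0 ∧ ‖x‖⁻¹ • x ∈ ω})
    (hKopen : IsOpen K) (hKconv : Convex ℝ K) :
    ∀ Φ : EuclideanSpace ℝ (Fin n) → ℝ,
      DifferentiableOn ℝ (fun x => Φ (‖x‖⁻¹ • x)) K →
      Integrable Φ ((μH[(n : ℝ) - 1]).restrict ω) →
      Integrable (fun θ => Φ θ ^ 2) ((μH[(n : ℝ) - 1]).restrict ω) →
      Integrable (fun θ => ‖gradient (fun x => Φ (‖x‖⁻¹ • x)) θ‖ ^ 2)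
        ((μH[(n : ℝ) - 1]).restrict ω) →
      (∫ θ, Φ θ ∂((μH[(n : ℝ) - 1]).restrict ω)) = 0 →
      ((n : ℝ) - 1) * ∫ θ, Φ θ ^ 2 ∂((μH[(n : ℝ) - 1]).restrict ω) ≤
        ∫ θ, ‖gradient (fun x => Φ (‖x‖⁻¹ • x)) θ‖ ^ 2
          ∂((μH[(n : ℝ) - 1]).restrict ω) := by
  subst hK
  intro Φ hΦ _ hΦ₂ hΦ' hΦ₀
  simpa only [finrank_euclideanSpace_fin] using hemisphere_eigenvalue_bound_general
    (hω.trans fun x hx ↦ mem_sphere_zero_iff_norm.2 hx.1) hKopen hKconv hΦ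
    (by simpa using hΦ₂) (by simpa using hΦ') (by simpa using hΦ₀)
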